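/- arXiv:2502.06071 — 2 statements merged into one kernel-verified Lean document; each statement's English description precedes it below -/
import Mathlib

section
/- Let Q ≥ 2 be a fixed integer and ρ ∈ (0, 1/2] a fixed real. For each positive integer κ set N = κQ and n = ⌊ρN⌋. For the load profile chain {ξ(t)} on Ξ_{n,S,κ}, for each ε ∈ (0,1) there exist constants C_ε and N_ε such that for all n ≥ N_ε one has |T^mix(ε) − (1/2)(1−ρ)·n·log n| ≤ C_ε·n. In particular the chain exhibits cutoff at time (1/2)(1−ρ)n log n with window of order n. -/
/-!
The load profile chain is the image of a random walk on sets. Give each of the `Q` resources `kap`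
sites, so that there are `N = kap * Q` sites, and let `n` of them be occupied. The walk moves a
uniformly chosen occupied site to one of the `N - n + 1` sites that are then free. Counting occupied
sites per resource turns this walk into the load profile chain (`lump`), and turns the uniform law
on `n`-subsets into `loadPi` (`loadPi_eq`). Hence every event probability of the load profile chain
is one of the walk on `n`-subsets (`event_eq`).

The walk on `n`-subsets is the down-up walk of the Johnson scheme. The commutation relation
`upDown_eq` between going up and going down in the subset lattice gives its spectrum in trace form
(`trace_aeval_downUp`): the eigenvalues are `1 - i (N - i + 1) / (n (N - n + 1))` for `0 ≤ i ≤ n`,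
with multiplicities `C(N,i) - C(N,i-1)`.

Upper bound (`upper_DTV`). The walk is symmetric and transitive, so the squared `ℓ²` distance to the
uniform law at time `t` is the normalised trace of its `2t`-th power minus one, which is at most
`∑_{i ≥ 1} C(N,i) (1 - i (N - i + 1) / (n (N - n + 1))) ^ (2t)` (`johnson_l1_le`). At
`t = (1/2) (n (N - n + 1) / N) (log N + K)` this is at most a geometric series with ratio
`exp (2 - K/2)` (`sum_eigen_le`), and `n (N - n + 1) / N` is `(1 - rho) n + O(1)`.

Lower bound (`lower_DTV`). The centred number of occupied sites of one resource is an eigenfunction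
for the second largest eigenvalue. Starting from a profile concentrated on that resource, its mean
is of order `√n` times a large constant at time `(1/2) (1 - rho) n log n - C n`, while its variance
stays at most `n`, both at that time and in equilibrium. Chebyshev's inequality then separates the
two laws (`johnson_lower`).
-/

open scoped BigOperators
open Filter MeasureTheory

noncomputable section

namespace CongestionPaper

attribute [local instance 10] Classical.propDecidable

/-- Evolution of a distribution under a transition kernel `p` on a finite state space:
`evolve p mu t` is the law at time `t` of the Markov chain with transition matrix `p`
and initial distribution `mu`. -/
def evolve {X : Type*} [Fintype X] (p : X -> X -> Real) (mu : X -> Real) : Nat -> X -> Real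
  | 0 => mu
  | (t+1) => fun y => ∑ x, evolve p mu t x * p x y

/-- Point mass at `x0`. -/
def delta {X : Type*} (x0 : X) : X -> Real := fun x => if x = x0 then 1 else 0

/-- Total variation distance between two distributions on a finite type,
as the supremum over events `A` of the difference of probabilities of `A`. -/
def tvDist {X : Type*} [Fintype X] (mu nu : X -> Real) : Real :=
  ⨆ A : Finset X, |∑ x ∈ A, (mu x - nu x)|

/-- Total variation distance between the pushforwards of `mu` and `nu` under `m`. -/
def tvDistOn {X : Type*} [Fintype X] {Y : Type*} (m : X -> Y) (mu nu : X -> Real) : Real :=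
  ⨆ B : Finset Y, |∑ x : X, (if m x ∈ B then mu x - nu x else 0)|

/-- Worst-case (over the initial state) total variation distance to `pi` at time `t`. -/
def DTV {X : Type*} [Fintype X] (p : X -> X -> Real) (pi : X -> Real) (t : Nat) : Real :=
  ⨆ x0 : X, tvDist (evolve p (delta x0) t) pi

/-- Mixing time `T^mix(eps)`. -/
def Tmix {X : Type*} [Fintype X] (p : X -> X -> Real) (pi : X -> Real) (eps : Real) : Nat :=
  sInf {t : Nat | DTV p pi t ≤ eps}

/-- Probability of a given trajectory `w` of length `T` for the chain started at `x0`. -/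
def pathProb {X : Type*} [Fintype X] (p : X -> X -> Real) (x0 : X) (T : Nat)
    (w : Fin (T+1) -> X) : Real :=
  (if w 0 = x0 then 1 else 0) * ∏ t : Fin T, p (w t.castSucc) (w t.succ)

/-- Probability that some state visited up to time `T` satisfies `Bad`. -/
def hitProb {X : Type*} [Fintype X] (p : X -> X -> Real) (x0 : X) (T : Nat)
    (Bad : X -> Prop) : Real :=
  ∑ w : Fin (T+1) -> X, (if ∃ t, Bad (w t) then pathProb p x0 T w else 0)

/-! ### The load profile chain -/

/-- Load profiles: `xi : S -> {0,...,kappa}` with `∑ xi v = n`, where `S = Fin Q`. -/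
abbrev LoadState (Q kap n : Nat) := {xi : Fin Q -> Fin (kap+1) // (∑ v, ((xi v : Nat))) = n}

/-- Transition matrix of the load profile chain on `Xi_{n,S,kappa}`. -/
def loadP (Q kap n : Nat) (xi xi' : LoadState Q kap n) : Real :=
  if xi' = xi then
    (∑ v, ((xi.1 v : Nat) : Real) * (((1 + kap - (xi.1 v : Nat) : Nat)) : Real))
      / ((n : Real) * ((1 + kap * Q - n : Nat) : Real))
  else
    (∑ vm, ∑ vp,
      if vm ≠ vp ∧ (xi'.1 vm : Nat) + 1 = (xi.1 vm : Nat) ∧ (xi'.1 vp : Nat) = (xi.1 vp : Nat) + 1 ∧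
          (∀ v, v ≠ vm -> v ≠ vp -> xi'.1 v = xi.1 v)
        then ((xi.1 vm : Nat) : Real) * (((kap - (xi.1 vp : Nat) : Nat)) : Real) else 0)
      / ((n : Real) * ((1 + kap * Q - n : Nat) : Real))

/-- Stationary weight `∏_v 1/(xi_v! (kappa - xi_v)!)`. -/
def loadWeight (Q kap n : Nat) (xi : LoadState Q kap n) : Real :=
  ∏ v, (1 : Real) /
    ((Nat.factorial (xi.1 v : Nat) : Real) * (Nat.factorial (kap - (xi.1 v : Nat)) : Real))

/-- The stationary distribution `pi_n` of the load profile chain. -/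
def loadPi (Q kap n : Nat) (xi : LoadState Q kap n) : Real :=
  loadWeight Q kap n xi / (∑ eta : LoadState Q kap n, loadWeight Q kap n eta)

/-- `xi ∈ Xi(delta)`: the normalized load profile is within Euclidean distance `delta`
of the constant vector `(rho/Q)_v`. -/
def loadNear (Q kap n : Nat) (rho : Real) (xi : LoadState Q kap n) (del : Real) : Prop :=
  Real.sqrt (∑ v, (((xi.1 v : Nat) : Real) / ((kap * Q : Nat) : Real) - rho / (Q : Real))^2) ≤ del

/-- `D(xi, xi') = (1/2) ∑_v |xi_v - xi'_v|`. -/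
def loadD (Q kap n : Nat) (xi xi' : LoadState Q kap n) : Real :=
  (1/2) * ∑ v, |((xi.1 v : Nat) : Real) - ((xi'.1 v : Nat) : Real)|

/-! ### The congestion dynamics (Glauber dynamics) -/

/-- `xi_v(sigma)`: the number of players adopting resource `v`. -/
def xiCount {Q n : Nat} (sg : Fin n -> Fin Q) (v : Fin Q) : Nat :=
  (Finset.univ.filter fun i => sg i = v).card

/-- Configurations: `sigma : [n] -> S` with `xi_v(sigma) ≤ kappa` for every `v`. -/
abbrev ConfigState (Q kap n : Nat) := {sg : Fin n -> Fin Q // ∀ v, xiCount sg v ≤ kap}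

/-- Transition matrix of the congestion dynamics. -/
def configP (Q kap n : Nat) (sg sg' : ConfigState Q kap n) : Real :=
  if sg' = sg then
    (∑ i, ((1 + kap - xiCount sg.1 (sg.1 i) : Nat) : Real))
      / ((n : Real) * ((1 + kap * Q - n : Nat) : Real))
  else
    (∑ i, if sg'.1 i ≠ sg.1 i ∧ (∀ j, j ≠ i -> sg'.1 j = sg.1 j)
        then ((kap - xiCount sg.1 (sg'.1 i) : Nat) : Real) else 0)
      / ((n : Real) * ((1 + kap * Q - n : Nat) : Real))

/-- The potential `F(sigma) = ∑_v ∑_{s=0}^{xi_v(sigma)} (log(kappa+1) - log(kappa+1-s))`. -/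
def potF (Q kap n : Nat) (sg : ConfigState Q kap n) : Real :=
  ∑ v, ∑ s ∈ Finset.range (xiCount sg.1 v + 1),
    (Real.log ((kap : Real) + 1) - Real.log ((kap : Real) + 1 - (s : Real)))

/-- The Gibbs measure `mu_n(sigma) = e^{-F(sigma)}/Z_n`. -/
def gibbs (Q kap n : Nat) (sg : ConfigState Q kap n) : Real :=
  Real.exp (-(potF Q kap n sg)) / (∑ ta : ConfigState Q kap n, Real.exp (-(potF Q kap n ta)))

/-- `sigma ∈ S(delta)`. -/
def configNear (Q kap n : Nat) (rho : Real) (sg : ConfigState Q kap n) (del : Real) : Prop :=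
  Real.sqrt (∑ v, ((xiCount sg.1 v : Real) / ((kap * Q : Nat) : Real) - rho / (Q : Real))^2) ≤ del

/-- The load matrix `xi^{sigma0}_{u,v}(sigma)`. -/
def ximat {Q n : Nat} (sg0 sg : Fin n -> Fin Q) (u v : Fin Q) : Nat :=
  (Finset.univ.filter fun i => sg0 i = u ∧ sg i = v).card

/-- `sigma ∈ S(sigma0, delta)`: for each `u`, the normalized `u`-th row of the
load matrix is within Euclidean distance `delta` of the constant vector `(1/Q)_v`. -/
def configNearMat (Q kap n : Nat) (sg0 sg : ConfigState Q kap n) (del : Real) : Prop :=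
  ∀ u, Real.sqrt
      (∑ v, ((ximat sg0.1 sg.1 u v : Real) / (xiCount sg0.1 u : Real) - 1 / (Q : Real))^2) ≤ del

/-- `D^{sigma0}(sigma, sigma') = ∑_u (1/2) ∑_v |xi^{sigma0}_{u,v}(sigma) - xi^{sigma0}_{u,v}(sigma')|`. -/
def matD (Q kap n : Nat) (sg0 sg sg' : ConfigState Q kap n) : Real :=
  ∑ u, (1/2) * ∑ v, |(ximat sg0.1 sg.1 u v : Real) - (ximat sg0.1 sg'.1 u v : Real)|

/-- The constant `cStar = (sqrt Q/(1-rho) + rho/(2Q))^{1/2}`. -/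
def cStar (Q : Nat) (rho : Real) : Real :=
  Real.sqrt (Real.sqrt (Q : Real) / (1 - rho) + rho / (2 * (Q : Real)))

/-! ### The base-exchange chain on `B^(Q)(n)` -/

/-- `B^(Q)(n) = {x ∈ Z_{≥0}^Q : ∑ x_i = n}`. -/
abbrev BState (Q n : Nat) := {x : Fin Q -> Fin (n+1) // (∑ i, ((x i : Nat))) = n}

/-- Transition matrix of the base-exchange chain on `B^(Q)(n)`. -/
def baseP (Q n : Nat) (x y : BState Q n) : Real :=
  if y = x then
    ∑ i, (if 0 < (x.1 i : Nat) then (1 : Real) / ((Q : Real) * (Q : Real)) else (1 : Real) / (Q : Real))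
  else
    ∑ i, ∑ j,
      if i ≠ j ∧ (y.1 i : Nat) + 1 = (x.1 i : Nat) ∧ (y.1 j : Nat) = (x.1 j : Nat) + 1 ∧
          (∀ v, v ≠ i -> v ≠ j -> y.1 v = x.1 v)
        then (1 : Real) / ((Q : Real) * (Q : Real)) else 0

/-- The lazy version of the base-exchange chain. -/
def lazyBaseP (Q n : Nat) (x y : BState Q n) : Real :=
  (1/2) * (if y = x then 1 else 0) + (1/2) * baseP Q n x y

/-- The uniform distribution on `B^(Q)(n)`. -/
def unifB (Q n : Nat) (x : BState Q n) : Real := 1 / (Fintype.card (BState Q n) : Real)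

/-! ### The walk on subsets of fixed size and its spectrum -/

section Johnson

variable {α : Type*} [Fintype α] [DecidableEq α]

/-- The `k`-element subsets of `α`. -/
abbrev Level (α : Type*) [Fintype α] [DecidableEq α] (k : ℕ) := {x : Finset α // x.card = k}

/-- The inclusion matrix between `(k+1)`-subsets (rows) and `k`-subsets (columns). -/
def incl (α : Type*) [Fintype α] [DecidableEq α] (k : ℕ) : Matrix (Level α (k+1)) (Level α k) ℝ :=
  fun x z => if z.1 ⊆ x.1 then 1 else 0

/-- The unnormalised down-up matrix on `k`-subsets: the entry at `(x, y)` counts the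
`(k-1)`-subsets contained in both `x` and `y`. It is `k` times the identity plus the adjacency
matrix of the Johnson graph. -/
def downUp (α : Type*) [Fintype α] [DecidableEq α] : (k : ℕ) → Matrix (Level α k) (Level α k) ℝ
  | 0 => 0
  | k+1 => incl α k * (incl α k).transpose

lemma sum_incl_lower {k : ℕ} (x : Level α (k+1)) (φ : Finset α → ℝ) :
    ∑ z : Level α k, incl α k x z * φ z.1 = ∑ a ∈ x.1, φ (x.1.erase a) := by
  have hx := x.2
  simp only [incl, ite_mul, one_mul, zero_mul]
  rw [← Finset.sum_filter]
  symm
  refine Finset.sum_bij (fun a ha => (⟨x.1.erase a, by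
    rw [Finset.card_erase_of_mem ha, hx]; rfl⟩ : Level α k)) ?_ ?_ ?_ ?_
  · intro a ha
    simpa using Finset.erase_subset a x.1
  · intro a ha b hb hab
    simp only [Subtype.mk.injEq] at hab
    exact (Finset.erase_injOn x.1) ha hb hab
  · intro z hz
    have hz' : z.1 ⊆ x.1 := by simpa using hz
    have : (x.1 \ z.1).card = 1 := by
      rw [Finset.card_sdiff_of_subset hz', x.2, z.2]; omega
    obtain ⟨a, ha⟩ := Finset.card_eq_one.1 this
    have ha1 : a ∈ x.1 \ z.1 := by rw [ha]; simp
    refine ⟨a, (Finset.mem_sdiff.1 ha1).1, ?_⟩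
    apply Subtype.ext
    change x.1.erase a = z.1
    rw [Finset.erase_eq, ← ha, Finset.sdiff_sdiff_eq_self hz']
  · intro a ha
    rfl

lemma sum_incl_upper {k : ℕ} (z : Level α k) (φ : Finset α → ℝ) :
    ∑ x : Level α (k+1), incl α k x z * φ x.1 = ∑ b ∈ z.1ᶜ, φ (insert b z.1) := by
  simp only [incl, ite_mul, one_mul, zero_mul]
  rw [← Finset.sum_filter]
  symm
  refine Finset.sum_bij (fun b hb => (⟨insert b z.1, by
    rw [Finset.card_insert_of_notMem (by simpa using hb), z.2]⟩ : Level α (k+1))) ?_ ?_ ?_ ?_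
  · intro a ha
    simp
  · intro a ha b hb hab
    simp only [Subtype.mk.injEq] at hab
    have h1 : a ∈ insert b z.1 := by rw [← hab]; simp
    have h2 : a ∉ z.1 := by simpa using ha
    simpa [h2] using h1
  · intro x hx
    have hz' : z.1 ⊆ x.1 := by simpa using hx
    have : (x.1 \ z.1).card = 1 := by
      rw [Finset.card_sdiff_of_subset hz', x.2, z.2]; omega
    obtain ⟨a, ha⟩ := Finset.card_eq_one.1 this
    have ha1 : a ∈ x.1 \ z.1 := by rw [ha]; simp
    refine ⟨a, by simpa using (Finset.mem_sdiff.1 ha1).2, ?_⟩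
    apply Subtype.ext
    change insert a z.1 = x.1
    rw [Finset.insert_eq, ← ha, Finset.sdiff_union_of_subset hz']
  · intro a ha
    rfl

lemma sum_downUp_mul {k : ℕ} (x : Level α (k+1)) (φ : Finset α → ℝ) :
    ∑ y : Level α (k+1), downUp α (k+1) x y * φ y.1
      = ∑ a ∈ x.1, ∑ b ∈ (x.1.erase a)ᶜ, φ (insert b (x.1.erase a)) := by
  rw [← sum_incl_lower x (fun z => ∑ b ∈ zᶜ, φ (insert b z))]
  simp only [← sum_incl_upper, downUp, Matrix.mul_apply, Matrix.transpose_apply,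
    Finset.sum_mul, Finset.mul_sum]
  rw [Finset.sum_comm]
  simp only [mul_assoc]

lemma downUp_apply {k : ℕ} (x y : Level α k) :
    downUp α k x y = if x = y then (k : ℝ) else if (x.1 \ y.1).card = 1 then 1 else 0 := by
  cases k with
  | zero =>
    have : x = y := Subtype.ext (by
      rw [Finset.card_eq_zero.1 x.2, Finset.card_eq_zero.1 y.2])
    simp [downUp, this]
  | succ k =>
    have h : downUp α (k+1) x y = ∑ a ∈ x.1, if x.1.erase a ⊆ y.1 then (1:ℝ) else 0 := by
      rw [← sum_incl_lower x (fun z => if z ⊆ y.1 then (1:ℝ) else 0)]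
      rfl
    rw [h]
    split_ifs with h1 h2
    · subst h1
      simp [Finset.erase_subset, x.2]
    · obtain ⟨a, ha⟩ := Finset.card_eq_one.1 h2
      have ha1 : a ∈ x.1 \ y.1 := by rw [ha]; simp
      rw [Finset.sum_eq_single_of_mem a (Finset.mem_sdiff.1 ha1).1]
      · rw [if_pos]
        rw [Finset.erase_eq, ← ha]
        intro b hb
        simp at hb
        exact hb.2
      · intro b _ hba
        rw [if_neg]
        intro hs
        exact (Finset.mem_sdiff.1 ha1).2
          (hs (Finset.mem_erase.2 ⟨fun h => hba h.symm, (Finset.mem_sdiff.1 ha1).1⟩))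
    · apply Finset.sum_eq_zero
      intro a ha
      rw [if_neg]
      intro hs
      have hsub : x.1 \ y.1 ⊆ {a} := by
        intro b hb
        rw [Finset.mem_sdiff] at hb
        by_contra hne
        exact hb.2 (hs (Finset.mem_erase.2 ⟨by simpa using hne, hb.1⟩))
      have hle := Finset.card_le_card hsub
      rw [Finset.card_singleton] at hle
      have h0 : (x.1 \ y.1).card = 0 := by omega
      have hxy : x.1 ⊆ y.1 := by
        rwa [Finset.card_eq_zero, Finset.sdiff_eq_empty_iff_subset] at h0
      exact h1 (Subtype.ext (Finset.eq_of_subset_of_card_le hxy (by rw [x.2, y.2])))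

lemma upDown_apply {k : ℕ} (x y : Level α k) :
    ((incl α k).transpose * incl α k) x y
      = if x = y then (Fintype.card α : ℝ) - k else if (x.1 \ y.1).card = 1 then 1 else 0 := by
  have h : ((incl α k).transpose * incl α k) x y
      = ∑ b ∈ x.1ᶜ, if y.1 ⊆ insert b x.1 then (1:ℝ) else 0 := by
    rw [← sum_incl_upper x (fun z => if y.1 ⊆ z then (1:ℝ) else 0)]
    rfl
  rw [h, Finset.card_sdiff_comm (x.2.trans y.2.symm)]
  split_ifs with h1 h2
  · subst h1
    have := Finset.card_le_univ x.1
    rw [x.2] at this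
    simp [Finset.subset_insert, Finset.card_compl, x.2, Nat.cast_sub this]
  · obtain ⟨a, ha⟩ := Finset.card_eq_one.1 h2
    have ha1 : a ∈ y.1 \ x.1 := by rw [ha]; simp
    rw [Finset.sum_eq_single_of_mem a (by simpa using (Finset.mem_sdiff.1 ha1).2)]
    · rw [if_pos]
      rw [Finset.insert_eq, ← ha]
      intro b hb
      simp [hb]
    · intro b _ hba
      rw [if_neg]
      intro hs
      have := hs (Finset.mem_sdiff.1 ha1).1
      rw [Finset.mem_insert] at this
      rcases this with h | h
      · exact hba h.symm
      · exact (Finset.mem_sdiff.1 ha1).2 h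
  · apply Finset.sum_eq_zero
    intro a ha
    rw [if_neg]
    intro hs
    have hsub : y.1 \ x.1 ⊆ {a} := by
      intro b hb
      rw [Finset.mem_sdiff] at hb
      have := hs hb.1
      rw [Finset.mem_insert] at this
      simpa [hb.2] using this
    have hle := Finset.card_le_card hsub
    rw [Finset.card_singleton] at hle
    have h0 : (y.1 \ x.1).card = 0 := by omega
    have hxy : y.1 ⊆ x.1 := by
      rwa [Finset.card_eq_zero, Finset.sdiff_eq_empty_iff_subset] at h0
    exact h1 (Subtype.ext (Finset.eq_of_subset_of_card_le hxy (by rw [x.2, y.2])).symm)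

/-- The commutation relation behind the spectrum: going up then down differs from going down then
up by a scalar. -/
lemma upDown_eq (k : ℕ) :
    (incl α k).transpose * incl α k
      = downUp α k + algebraMap ℝ _ ((Fintype.card α : ℝ) - 2 * k) := by
  ext x y
  rw [upDown_apply, Matrix.add_apply, downUp_apply, Matrix.algebraMap_matrix_apply]
  split_ifs
  · simp; ring
  · simp
  · simp

/-- `f(AB)` and `f(BA)` have the same trace up to the contribution of zero eigenvalues. -/
lemma trace_aeval_mul_comm {m n : Type*} [Fintype m] [DecidableEq m] [Fintype n] [DecidableEq n]
    (A : Matrix m n ℝ) (B : Matrix n m ℝ) (f : Polynomial ℝ) :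
    (Polynomial.aeval (A * B) f).trace
      = (Polynomial.aeval (B * A) f).trace
        + f.eval 0 * ((Fintype.card m : ℝ) - Fintype.card n) := by
  induction f using Polynomial.induction_on' with
  | add p q hp hq =>
    simp only [map_add, Matrix.trace_add, Polynomial.eval_add, hp, hq]
    ring
  | monomial d a =>
    simp only [Polynomial.aeval_monomial, Algebra.algebraMap_eq_smul_one, smul_mul_assoc, one_mul,
      Matrix.trace_smul, smul_eq_mul, Polynomial.eval_monomial]
    cases d with
    | zero =>
      simp [Matrix.trace_one]
      ring
    | succ d =>
      have h1 : (A * B) ^ (d+1) = A * ((B * A) ^ d * B) := by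
        induction d with
        | zero => simp
        | succ d ih => rw [pow_succ', ih, pow_succ' (B * A)]; simp only [Matrix.mul_assoc]
      rw [h1, Matrix.trace_mul_comm, Matrix.mul_assoc, ← pow_succ]
      simp

/-- Spectrum of the down-up matrix in trace form: the eigenvalue indexed by `i ≤ k` is
`k(N-k+1) - i(N-i+1)`, with multiplicity `C(N,i) - C(N,i-1)`. -/
lemma trace_aeval_downUp (k : ℕ) (f : Polynomial ℝ) :
    (Polynomial.aeval (downUp α k) f).trace
      = f.eval ((k : ℝ) * (Fintype.card α - k + 1))
        + ∑ i ∈ Finset.range k,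
          (((Fintype.card α).choose (i+1) : ℝ) - (Fintype.card α).choose i) *
            f.eval ((k : ℝ) * (Fintype.card α - k + 1)
              - ((i : ℝ) + 1) * (Fintype.card α - i)) := by
  induction k generalizing f with
  | zero =>
    have h : Polynomial.aeval (downUp α 0) f = algebraMap ℝ _ (f.eval 0) := by
      change Polynomial.aeval (0 : Matrix (Level α 0) (Level α 0) ℝ) f = _
      rw [← map_zero (algebraMap ℝ (Matrix (Level α 0) (Level α 0) ℝ)),
        Polynomial.aeval_algebraMap_apply]
      simp
    rw [h]
    simp [Matrix.trace, Matrix.algebraMap_matrix_apply, Fintype.card_finset_len]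
  | succ k ih =>
    have hcomp : Polynomial.aeval ((incl α k).transpose * incl α k) f
        = Polynomial.aeval (downUp α k)
          (f.comp (Polynomial.X + Polynomial.C ((Fintype.card α : ℝ) - 2 * k))) := by
      rw [Polynomial.aeval_comp, upDown_eq]
      simp
    have h := trace_aeval_mul_comm (incl α k) (incl α k).transpose f
    rw [hcomp, ih] at h
    rw [show downUp α (k+1) = incl α k * (incl α k).transpose from rfl, h,
      Finset.sum_range_succ, Fintype.card_finset_len, Fintype.card_finset_len]
    simp only [Polynomial.eval_comp, Polynomial.eval_add, Polynomial.eval_X, Polynomial.eval_C]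
    have e1 : ∀ s : ℝ, (k : ℝ) * (Fintype.card α - k + 1) - s + ((Fintype.card α : ℝ) - 2 * k)
        = ((k+1 : ℕ) : ℝ) * (Fintype.card α - ((k+1 : ℕ) : ℝ) + 1) - s := by
      intro s; push_cast; ring
    have e2 : (k : ℝ) * (Fintype.card α - k + 1) + ((Fintype.card α : ℝ) - 2 * k)
        = ((k+1 : ℕ) : ℝ) * (Fintype.card α - ((k+1 : ℕ) : ℝ) + 1) := by
      push_cast; ring
    have e3 : ((k+1 : ℕ) : ℝ) * (Fintype.card α - ((k+1 : ℕ) : ℝ) + 1)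
        - ((k : ℝ) + 1) * (Fintype.card α - k) = 0 := by
      push_cast; ring
    simp only [e1, e2, e3]
    ring

/-- The random walk on `k`-subsets: move a uniformly chosen element of the set to one of the
`N - k + 1` positions that are then free. -/
def johnson (α : Type*) [Fintype α] [DecidableEq α] (k : ℕ) : Matrix (Level α k) (Level α k) ℝ :=
  ((k : ℝ) * (Fintype.card α - k + 1))⁻¹ • downUp α k

lemma downUp_symm {k : ℕ} (x y : Level α k) : downUp α k x y = downUp α k y x := by
  rw [downUp_apply, downUp_apply, Finset.card_sdiff_comm (x.2.trans y.2.symm)]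
  simp only [eq_comm]

lemma downUp_nonneg {k : ℕ} (x y : Level α k) : 0 ≤ downUp α k x y := by
  rw [downUp_apply]
  split_ifs <;> positivity

lemma johnson_symm {k : ℕ} (x y : Level α k) : johnson α k x y = johnson α k y x := by
  simp only [johnson, Matrix.smul_apply, downUp_symm x y]

/-- `k(N-k+1)` is the number of equally likely moves out of a `k`-subset. -/
lemma moves_pos {k : ℕ} (hk : 0 < k) (hkN : k ≤ Fintype.card α) :
    0 < (k : ℝ) * (Fintype.card α - k + 1) := by
  have h1 : (0:ℝ) < k := by exact_mod_cast hk
  have h2 : (k:ℝ) ≤ Fintype.card α := by exact_mod_cast hkN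
  apply mul_pos h1; linarith

lemma johnson_nonneg {k : ℕ} (hk : 0 < k) (hkN : k ≤ Fintype.card α) (x y : Level α k) :
    0 ≤ johnson α k x y := by
  simp only [johnson, Matrix.smul_apply, smul_eq_mul]
  exact mul_nonneg (inv_nonneg.2 (moves_pos hk hkN).le) (downUp_nonneg x y)

lemma sum_johnson_mul {k : ℕ} (hk : 0 < k) (x : Level α k) (φ : Finset α → ℝ) :
    ∑ y : Level α k, johnson α k x y * φ y.1
      = ((k : ℝ) * (Fintype.card α - k + 1))⁻¹ *
        ∑ a ∈ x.1, ∑ b ∈ (x.1.erase a)ᶜ, φ (insert b (x.1.erase a)) := by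
  obtain ⟨k, rfl⟩ := Nat.exists_eq_succ_of_ne_zero hk.ne'
  rw [← sum_downUp_mul]
  simp only [johnson, Matrix.smul_apply, smul_eq_mul, mul_assoc, Finset.mul_sum]

lemma card_free {k : ℕ} (x : Level α k) {a : α} (ha : a ∈ x.1) :
    (((x.1.erase a)ᶜ.card : ℕ) : ℝ) = Fintype.card α - k + 1 := by
  have h1 : 0 < x.1.card := Finset.card_pos.2 ⟨a, ha⟩
  have h2 := Finset.card_le_univ x.1
  rw [Finset.card_compl, Finset.card_erase_of_mem ha, Nat.cast_sub (by omega),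
    Nat.cast_sub (by omega), x.2]
  push_cast; ring

lemma johnson_row_sum {k : ℕ} (hk : 0 < k) (hkN : k ≤ Fintype.card α) (x : Level α k) :
    ∑ y : Level α k, johnson α k x y = 1 := by
  have h := sum_johnson_mul hk x (fun _ => 1)
  simp only [mul_one] at h
  rw [h]
  have : ∑ a ∈ x.1, ∑ b ∈ (x.1.erase a)ᶜ, (1:ℝ) = (k : ℝ) * (Fintype.card α - k + 1) := by
    rw [Finset.sum_congr rfl (g := fun _ => (Fintype.card α : ℝ) - k + 1)]
    · simp [x.2]; ring
    · intro a ha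
      rw [← card_free x ha]
      simp
  rw [this, inv_mul_cancel₀ (moves_pos hk hkN).ne']

/-- By symmetry under permutations of `α`, the return probability does not depend on the state. -/
lemma johnson_pow_diag {k : ℕ} (x y : Level α k) (t : ℕ) :
    (johnson α k ^ t) x x = (johnson α k ^ t) y y := by
  let e0 : {a // a ∈ x.1} ≃ {a // a ∈ y.1} := Finset.equivOfCardEq (x.2.trans y.2.symm)
  let σ : Equiv.Perm α := e0.extendSubtype
  let e : Level α k ≃ Level α k := (Equiv.finsetCongr σ).subtypeEquiv (by
    intro s; simp)
  have he : ∀ z : Level α k, (e z).1 = z.1.map σ.toEmbedding := fun z => rfl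
  have hexy : e x = y := by
    apply Subtype.ext
    rw [he]
    apply Finset.eq_of_subset_of_card_le
    · intro b hb
      obtain ⟨a, ha, rfl⟩ := Finset.mem_map.1 hb
      exact e0.extendSubtype_mem a ha
    · rw [Finset.card_map, x.2, y.2]
  have hinv : (johnson α k).submatrix e e = johnson α k := by
    ext u v
    simp only [Matrix.submatrix_apply, johnson, Matrix.smul_apply, downUp_apply, he,
      e.injective.eq_iff, ← Finset.map_sdiff, Finset.card_map]
  have hpow : ((johnson α k) ^ t).submatrix e e = johnson α k ^ t := by
    induction t with
    | zero => simp
    | succ t ih =>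
      rw [pow_succ, ← Matrix.submatrix_mul_equiv _ _ e e e, ih, hinv]
  rw [← hexy]
  conv_lhs => rw [← hpow]
  rfl

end Johnson

/-! ### Distance of the walk on subsets from uniformity -/

section JohnsonMixing

variable {α : Type*} [Fintype α] [DecidableEq α]

lemma johnson_pow_row_sum {k : ℕ} (hk : 0 < k) (hkN : k ≤ Fintype.card α) (t : ℕ) (x : Level α k) :
    ∑ y : Level α k, (johnson α k ^ t) x y = 1 := by
  induction t generalizing x with
  | zero => simp [Matrix.one_apply]
  | succ t ih =>
    simp only [pow_succ, Matrix.mul_apply]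
    rw [Finset.sum_comm]
    simp only [← Finset.mul_sum, johnson_row_sum hk hkN, mul_one, ih]

lemma johnson_pow_nonneg {k : ℕ} (hk : 0 < k) (hkN : k ≤ Fintype.card α) (t : ℕ)
    (x y : Level α k) : 0 ≤ (johnson α k ^ t) x y := by
  induction t generalizing y with
  | zero => rw [pow_zero, Matrix.one_apply]; split_ifs <;> norm_num
  | succ t ih =>
    rw [pow_succ, Matrix.mul_apply]
    exact Finset.sum_nonneg fun z _ => mul_nonneg (ih z) (johnson_nonneg hk hkN z y)

lemma johnson_pow_symm {k : ℕ} (t : ℕ) (x y : Level α k) :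
    (johnson α k ^ t) x y = (johnson α k ^ t) y x := by
  have h : (johnson α k).transpose = johnson α k := by
    ext x y; exact johnson_symm y x
  have h2 : (johnson α k ^ t).transpose = johnson α k ^ t := by
    rw [Matrix.transpose_pow, h]
  exact congrFun (congrFun h2 y) x

lemma level_card_pos {k : ℕ} (hkN : k ≤ Fintype.card α) :
    (0:ℝ) < Fintype.card (Level α k) := by
  rw [Fintype.card_finset_len]
  exact_mod_cast Nat.choose_pos hkN

lemma johnson_trace {k : ℕ} (hk : 0 < k) (hkN : k ≤ Fintype.card α) (m : ℕ) :
    (johnson α k ^ m).trace = 1 + ∑ i ∈ Finset.range k,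
      (((Fintype.card α).choose (i+1) : ℝ) - (Fintype.card α).choose i) *
        (1 - ((i:ℝ) + 1) * (Fintype.card α - i) / ((k : ℝ) * (Fintype.card α - k + 1))) ^ m := by
  have hc := moves_pos (α := α) hk hkN
  set c := (k : ℝ) * (Fintype.card α - k + 1) with hcdef
  have h1 : johnson α k ^ m
      = Polynomial.aeval (downUp α k) ((Polynomial.C c⁻¹ * Polynomial.X) ^ m) := by
    simp [johnson, ← hcdef, Algebra.smul_def]
  rw [h1, trace_aeval_downUp, ← hcdef]
  simp only [Polynomial.eval_pow, Polynomial.eval_mul, Polynomial.eval_C, Polynomial.eval_X]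
  rw [inv_mul_cancel₀ hc.ne', one_pow]
  congr 1
  apply Finset.sum_congr rfl
  intro i _
  congr 2
  field_simp

/-- The `ℓ²` bound on the distance to uniformity, obtained from the return probability at
time `2t`, which by transitivity is a normalised trace. -/
lemma johnson_l1_le {k : ℕ} (hk : 0 < k) (hkN : k ≤ Fintype.card α) (t : ℕ) (x : Level α k) :
    ∑ y : Level α k, |(johnson α k ^ t) x y - 1 / Fintype.card (Level α k)|
      ≤ Real.sqrt (∑ i ∈ Finset.range k, ((Fintype.card α).choose (i+1) : ℝ) *
        (1 - ((i:ℝ) + 1) * (Fintype.card α - i) / ((k : ℝ) * (Fintype.card α - k + 1))) ^ (2*t)) := by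
  set X : ℝ := (Fintype.card (Level α k) : ℝ) with hX
  have hXpos : 0 < X := level_card_pos hkN
  have hsq : ∑ y : Level α k, ((johnson α k ^ t) x y - 1 / X) ^ 2
      = (johnson α k ^ (2*t)) x x - 1 / X := by
    have e : ∀ y : Level α k, ((johnson α k ^ t) x y - 1 / X) ^ 2
        = (johnson α k ^ t) x y * (johnson α k ^ t) y x - 2 / X * (johnson α k ^ t) x y
          + (1 / X) ^ 2 := by
      intro y; rw [johnson_pow_symm t y x]; ring
    simp only [e, Finset.sum_add_distrib, Finset.sum_sub_distrib, ← Finset.mul_sum,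
      johnson_pow_row_sum hk hkN]
    rw [two_mul, pow_add, Matrix.mul_apply]
    simp only [Finset.sum_const, Finset.card_univ, nsmul_eq_mul, ← hX]
    field_simp
    ring
  have htr : X * (johnson α k ^ (2*t)) x x = (johnson α k ^ (2*t)).trace := by
    rw [Matrix.trace]
    simp only [Matrix.diag_apply]
    rw [Finset.sum_congr rfl (fun y _ => johnson_pow_diag y x (2*t))]
    simp [hX]
  apply Real.le_sqrt_of_sq_le
  have hcs := sq_sum_le_card_mul_sum_sq (s := (Finset.univ : Finset (Level α k)))
    (f := fun y => |(johnson α k ^ t) x y - 1 / X|)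
  simp only [sq_abs, Finset.card_univ] at hcs
  refine hcs.trans ?_
  rw [← hX, hsq, mul_sub, htr, johnson_trace hk hkN, mul_one_div_cancel hXpos.ne',
    add_sub_cancel_left]
  apply Finset.sum_le_sum
  intro i _
  apply mul_le_mul_of_nonneg_right
  · linarith [Nat.cast_nonneg (α := ℝ) ((Fintype.card α).choose i)]
  · exact (even_two_mul t).pow_nonneg _

/-- The centred number of elements of a `k`-subset in the block `B`. It is an eigenfunction of the
walk for the second largest eigenvalue. -/
def blockDev (B : Finset α) (k : ℕ) (s : Finset α) : ℝ :=
  ((s ∩ B).card : ℝ) - (k : ℝ) * B.card / Fintype.card α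

lemma blockDev_move (B : Finset α) (k : ℕ) {s : Finset α} {a b : α} (ha : a ∈ s)
    (hb : b ∈ (s.erase a)ᶜ) :
    blockDev B k (insert b (s.erase a))
      = blockDev B k s - (if a ∈ B then 1 else 0) + (if b ∈ B then 1 else 0) := by
  have key : ∀ u : Finset α, ((u ∩ B).card : ℝ) = ∑ i ∈ u, if i ∈ B then (1:ℝ) else 0 := by
    intro u; rw [← Finset.filter_mem_eq_inter, Finset.sum_boole]
  have hb' : b ∉ s.erase a := Finset.mem_compl.1 hb
  simp only [blockDev, key]
  rw [Finset.sum_insert hb', ← Finset.sum_erase_add s _ ha]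
  ring

lemma sum_free_block (B : Finset α) {s : Finset α} {a : α} (ha : a ∈ s) :
    ∑ b ∈ (s.erase a)ᶜ, (if b ∈ B then (1:ℝ) else 0)
      = B.card - (s ∩ B).card + (if a ∈ B then 1 else 0) := by
  have key : ∀ u : Finset α, ((u ∩ B).card : ℝ) = ∑ i ∈ u, if i ∈ B then (1:ℝ) else 0 := by
    intro u; rw [← Finset.filter_mem_eq_inter, Finset.sum_boole]
  have h1 := Finset.sum_add_sum_compl (s.erase a) (fun b => if b ∈ B then (1:ℝ) else 0)
  have h2 := key Finset.univ
  have h3 := Finset.sum_erase_add s (fun b => if b ∈ B then (1:ℝ) else 0) ha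
  rw [Finset.univ_inter] at h2
  rw [key s]
  linarith

lemma sum_johnson_blockDev {k : ℕ} (hk : 0 < k) (hkN : k ≤ Fintype.card α) (B : Finset α)
    (x : Level α k) :
    ∑ y : Level α k, johnson α k x y * blockDev B k y.1
      = (1 - Fintype.card α / ((k : ℝ) * (Fintype.card α - k + 1))) * blockDev B k x.1 := by
  have hc := moves_pos (α := α) hk hkN
  have hN : (0:ℝ) < Fintype.card α := by exact_mod_cast hk.trans_le hkN
  rw [sum_johnson_mul hk]
  have h1 : ∀ a ∈ x.1, ∑ b ∈ (x.1.erase a)ᶜ, blockDev B k (insert b (x.1.erase a))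
      = ((Fintype.card α : ℝ) - k + 1) * (blockDev B k x.1 - (if a ∈ B then 1 else 0))
        + (B.card - (x.1 ∩ B).card + (if a ∈ B then 1 else 0)) := by
    intro a ha
    rw [Finset.sum_congr rfl (fun b hb => blockDev_move B k ha hb), Finset.sum_add_distrib,
      sum_free_block B ha, Finset.sum_const, nsmul_eq_mul, card_free x ha]
  have h2 : ∑ a ∈ x.1, (if a ∈ B then (1:ℝ) else 0) = (x.1 ∩ B).card := by
    rw [← Finset.filter_mem_eq_inter, Finset.sum_boole]
  rw [Finset.sum_congr rfl h1, Finset.sum_add_distrib, ← Finset.mul_sum, Finset.sum_sub_distrib,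
    Finset.sum_add_distrib, h2]
  simp only [Finset.sum_const, x.2, nsmul_eq_mul]
  have h3 : ((x.1 ∩ B).card : ℝ) = blockDev B k x.1 + (k : ℝ) * B.card / Fintype.card α := by
    simp [blockDev]
  have h4 : (k : ℝ) ≠ 0 := left_ne_zero_of_mul hc.ne'
  have h5 : (Fintype.card α : ℝ) - k + 1 ≠ 0 := right_ne_zero_of_mul hc.ne'
  rw [h3]
  field_simp
  ring

lemma sum_johnson_blockDev_sq {k : ℕ} (hk : 0 < k) (hkN : k ≤ Fintype.card α) (B : Finset α)
    (x : Level α k) :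
    ∑ y : Level α k, johnson α k x y * blockDev B k y.1 ^ 2
      ≤ (1 - 2 * (Fintype.card α / ((k : ℝ) * (Fintype.card α - k + 1)))) * blockDev B k x.1 ^ 2
        + 1 := by
  have hc := moves_pos (α := α) hk hkN
  set f := blockDev B k with hf
  have h1 : ∑ y : Level α k, johnson α k x y * (f y.1 - f x.1) ^ 2 ≤ 1 := by
    rw [sum_johnson_mul hk x (fun s => (f s - f x.1) ^ 2), inv_mul_eq_div, div_le_one hc]
    have : ∀ a ∈ x.1, ∑ b ∈ (x.1.erase a)ᶜ, (f (insert b (x.1.erase a)) - f x.1) ^ 2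
        ≤ (Fintype.card α : ℝ) - k + 1 := by
      intro a ha
      rw [← card_free x ha, Finset.card_eq_sum_ones, Nat.cast_sum]
      apply Finset.sum_le_sum
      intro b hb
      rw [hf, blockDev_move B k ha hb]
      split_ifs <;> norm_num
    refine (Finset.sum_le_sum this).trans (le_of_eq ?_)
    simp [x.2]; ring
  have h2 : ∀ y : Level α k, johnson α k x y * f y.1 ^ 2
      = johnson α k x y * (f y.1 - f x.1) ^ 2 + 2 * f x.1 * (johnson α k x y * f y.1)
        - f x.1 ^ 2 * johnson α k x y := by
    intro y; ring
  simp only [h2, Finset.sum_sub_distrib, Finset.sum_add_distrib, ← Finset.mul_sum,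
    johnson_row_sum hk hkN]
  rw [sum_johnson_blockDev hk hkN]
  nlinarith [h1]

lemma johnson_pow_blockDev {k : ℕ} (hk : 0 < k) (hkN : k ≤ Fintype.card α) (B : Finset α)
    (x : Level α k) (t : ℕ) :
    ∑ y : Level α k, (johnson α k ^ t) x y * blockDev B k y.1
      = (1 - Fintype.card α / ((k : ℝ) * (Fintype.card α - k + 1))) ^ t * blockDev B k x.1 := by
  induction t with
  | zero => simp [Matrix.one_apply]
  | succ t ih =>
    have h1 : ∑ y : Level α k, (johnson α k ^ (t+1)) x y * blockDev B k y.1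
        = ∑ z : Level α k, (johnson α k ^ t) x z
          * ∑ y : Level α k, johnson α k z y * blockDev B k y.1 := by
      simp only [pow_succ (johnson α k), Matrix.mul_apply, Finset.sum_mul, Finset.mul_sum,
        mul_assoc]
      rw [Finset.sum_comm]
    rw [h1]
    simp only [sum_johnson_blockDev hk hkN]
    set g := Fintype.card α / ((k : ℝ) * (Fintype.card α - k + 1))
    simp only [mul_left_comm _ (1 - g), ← Finset.mul_sum, ih]
    ring

lemma johnson_pow_blockDev_sq {k : ℕ} (hk : 0 < k) (hkN : k ≤ Fintype.card α) (B : Finset α)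
    (hgap : 2 * (Fintype.card α / ((k : ℝ) * (Fintype.card α - k + 1))) ≤ 1)
    (x : Level α k) (t : ℕ) :
    ∑ y : Level α k, (johnson α k ^ t) x y * blockDev B k y.1 ^ 2
      ≤ ((1 - Fintype.card α / ((k : ℝ) * (Fintype.card α - k + 1))) ^ t * blockDev B k x.1) ^ 2
        + (k : ℝ) * (Fintype.card α - k + 1) / Fintype.card α := by
  have hc := moves_pos (α := α) hk hkN
  have hN : (0:ℝ) < Fintype.card α := by exact_mod_cast hk.trans_le hkN
  set g := Fintype.card α / ((k : ℝ) * (Fintype.card α - k + 1)) with hg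
  have hr : (k : ℝ) * (Fintype.card α - k + 1) / Fintype.card α = g⁻¹ := by rw [hg, inv_div]
  have hgpos : 0 < g := div_pos hN hc
  rw [hr]
  induction t with
  | zero =>
    simp [Matrix.one_apply]
    exact hgpos.le
  | succ t ih =>
    have h1 : ∑ y : Level α k, (johnson α k ^ (t+1)) x y * blockDev B k y.1 ^ 2
        = ∑ z : Level α k, (johnson α k ^ t) x z
          * ∑ y : Level α k, johnson α k z y * blockDev B k y.1 ^ 2 := by
      simp only [pow_succ (johnson α k), Matrix.mul_apply, Finset.sum_mul, Finset.mul_sum,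
        mul_assoc]
      rw [Finset.sum_comm]
    have h2 : ∑ y : Level α k, (johnson α k ^ (t+1)) x y * blockDev B k y.1 ^ 2
        ≤ (1 - 2 * g) * (∑ y : Level α k, (johnson α k ^ t) x y * blockDev B k y.1 ^ 2) + 1 := by
      rw [h1]
      calc _ ≤ ∑ z : Level α k, (johnson α k ^ t) x z * ((1 - 2 * g) * blockDev B k z.1 ^ 2 + 1) :=
            Finset.sum_le_sum fun z _ => mul_le_mul_of_nonneg_left
              (sum_johnson_blockDev_sq hk hkN B z) (johnson_pow_nonneg hk hkN t x z)
        _ = _ := by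
            simp only [mul_add, Finset.sum_add_distrib, mul_one, johnson_pow_row_sum hk hkN,
              mul_left_comm _ (1 - 2 * g), ← Finset.mul_sum]
    have h3 : g * g⁻¹ = 1 := mul_inv_cancel₀ hgpos.ne'
    set m := (1 - g) ^ t * blockDev B k x.1 with hm
    have h4 : (1 - g) ^ (t+1) * blockDev B k x.1 = (1 - g) * m := by rw [hm, pow_succ]; ring
    rw [h4]
    have h5 := mul_le_mul_of_nonneg_left ih (by linarith : 0 ≤ 1 - 2 * g)
    nlinarith [mul_nonneg (sq_nonneg g) (sq_nonneg m)]

lemma uniform_blockDev_sq {k : ℕ} (hk : 0 < k) (hkN : k ≤ Fintype.card α) (B : Finset α) :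
    ∑ y : Level α k, 1 / (Fintype.card (Level α k) : ℝ) * blockDev B k y.1 ^ 2
      ≤ (k : ℝ) * (Fintype.card α - k + 1) / Fintype.card α := by
  have hc := moves_pos (α := α) hk hkN
  have hN : (0:ℝ) < Fintype.card α := by exact_mod_cast hk.trans_le hkN
  have hX := level_card_pos (α := α) hkN
  have h0 : ∑ x : Level α k, ∑ y : Level α k, johnson α k x y * blockDev B k y.1 ^ 2
      = ∑ y : Level α k, blockDev B k y.1 ^ 2 := by
    rw [Finset.sum_comm]
    apply Finset.sum_congr rfl
    intro y _
    rw [← Finset.sum_mul]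
    simp only [fun x => johnson_symm x y, johnson_row_sum hk hkN, one_mul]
  have h1 := Finset.sum_le_sum (fun (x : Level α k) (_ : x ∈ Finset.univ) =>
    sum_johnson_blockDev_sq hk hkN B x)
  rw [h0, Finset.sum_add_distrib, ← Finset.mul_sum] at h1
  simp only [Finset.sum_const, Finset.card_univ, nsmul_eq_mul, mul_one] at h1
  rw [← Finset.mul_sum]
  set S := ∑ y : Level α k, blockDev B k y.1 ^ 2
  have hS : 0 ≤ S := Finset.sum_nonneg fun _ _ => sq_nonneg _
  set g := Fintype.card α / ((k : ℝ) * (Fintype.card α - k + 1)) with hg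
  have hr : (k : ℝ) * (Fintype.card α - k + 1) / Fintype.card α = g⁻¹ := by rw [hg, inv_div]
  have hgpos : 0 < g := div_pos hN hc
  rw [hr, one_div_mul_eq_div, div_le_iff₀ hX, inv_mul_eq_div, le_div_iff₀ hgpos]
  nlinarith

/-- Chebyshev's inequality separates the law at time `t` from the uniform law by the event that
`blockDev` exceeds half its mean at time `t`. -/
lemma johnson_lower {k : ℕ} (hk : 0 < k) (hkN : k ≤ Fintype.card α) (B : Finset α)
    (hgap : 2 * (Fintype.card α / ((k : ℝ) * (Fintype.card α - k + 1))) ≤ 1)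
    (x : Level α k) (t : ℕ) (m : ℝ)
    (hm : m = (1 - Fintype.card α / ((k : ℝ) * (Fintype.card α - k + 1))) ^ t * blockDev B k x.1)
    (hmpos : 0 < m) :
    1 - 8 * ((k : ℝ) * (Fintype.card α - k + 1) / Fintype.card α) / m ^ 2
      ≤ ∑ y : Level α k, if m / 2 < blockDev B k y.1
          then (johnson α k ^ t) x y - 1 / Fintype.card (Level α k) else 0 := by
  have h1 := johnson_pow_blockDev hk hkN B x t
  have h2 := johnson_pow_blockDev_sq hk hkN B hgap x t
  have h3 := uniform_blockDev_sq (α := α) hk hkN B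
  rw [← hm] at h1 h2
  set r := (k : ℝ) * (Fintype.card α - k + 1) / Fintype.card α
  have hX := level_card_pos (α := α) hkN
  set u : ℝ := 1 / Fintype.card (Level α k)
  have hu : 0 ≤ u := by positivity
  set p := fun y => (johnson α k ^ t) x y with hp
  have hp0 : ∀ y, 0 ≤ p y := johnson_pow_nonneg hk hkN t x
  have hp1 : ∑ y, p y = 1 := johnson_pow_row_sum hk hkN t x
  -- pointwise Chebyshev, multiplied through by `(m/2)²`
  have hpt : ∀ y : Level α k, p y * (m ^ 2 / 4) - p y * (blockDev B k y.1 - m) ^ 2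
      - u * blockDev B k y.1 ^ 2
      ≤ (m ^ 2 / 4) * (if m / 2 < blockDev B k y.1 then p y - u else 0) := by
    intro y
    set f := blockDev B k y.1
    have hpy := hp0 y
    split_ifs with h
    · have : m ^ 2 / 4 ≤ f ^ 2 := by nlinarith
      nlinarith [mul_nonneg hpy (sq_nonneg (f - m)), mul_le_mul_of_nonneg_left this hu]
    · have : m ^ 2 / 4 ≤ (f - m) ^ 2 := by nlinarith
      nlinarith [mul_le_mul_of_nonneg_left this hpy, mul_nonneg hu (sq_nonneg f)]
  have hsum := Finset.sum_le_sum (fun (y : Level α k) (_ : y ∈ Finset.univ) => hpt y)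
  rw [← Finset.mul_sum, Finset.sum_sub_distrib, Finset.sum_sub_distrib, ← Finset.sum_mul, hp1]
    at hsum
  have hvar : ∑ y : Level α k, p y * (blockDev B k y.1 - m) ^ 2 ≤ r := by
    have e : ∀ y : Level α k, p y * (blockDev B k y.1 - m) ^ 2
        = p y * blockDev B k y.1 ^ 2 - 2 * m * (p y * blockDev B k y.1) + m ^ 2 * p y := by
      intro y; ring
    simp only [e, Finset.sum_add_distrib, Finset.sum_sub_distrib, ← Finset.mul_sum, hp1]
    rw [h1]
    linarith [h2]
  have hm2 : 0 < m ^ 2 := by positivity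
  have : 1 - 8 * r / m ^ 2 = (m ^ 2 - 8 * r) / m ^ 2 := by field_simp
  rw [this, div_le_iff₀ hm2]
  nlinarith [hsum, hvar, h3]

end JohnsonMixing

/-! ### The load profile chain as a projection -/

section Lumping

variable {Q kap n : ℕ}

/-- The number of occupied sites of resource `v`, where the sites of `v` are the pairs `(v, j)`
with `j < kap`. -/
def cnt (s : Finset (Fin Q × Fin kap)) (v : Fin Q) : ℕ :=
  (Finset.univ.filter fun j => (v, j) ∈ s).card

lemma sum_comp_fst (s : Finset (Fin Q × Fin kap)) (g : Fin Q → ℝ) :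
    ∑ b ∈ s, g b.1 = ∑ v, (cnt s v : ℝ) * g v := by
  have h : ∑ b ∈ s, g b.1 = ∑ b : Fin Q × Fin kap, if b ∈ s then g b.1 else 0 := by
    rw [← Finset.sum_filter]; simp
  rw [h, Fintype.sum_prod_type]
  apply Finset.sum_congr rfl
  intro v _
  rw [← Finset.sum_filter]
  simp [cnt]

lemma cnt_eq_sum (s : Finset (Fin Q × Fin kap)) (v : Fin Q) :
    cnt s v = ∑ b ∈ s, if v = b.1 then 1 else 0 := by
  have h := sum_comp_fst s (fun w => if v = w then 1 else 0)
  simp only [mul_ite, mul_one, mul_zero, Finset.sum_ite_eq, Finset.mem_univ, if_true] at h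
  have h' : ((∑ b ∈ s, if v = b.1 then 1 else 0 : ℕ) : ℝ) = cnt s v := by
    rw [← h]; push_cast; rfl
  exact_mod_cast h'.symm

lemma sum_cnt (s : Finset (Fin Q × Fin kap)) : ∑ v, cnt s v = s.card := by
  have h := sum_comp_fst s (fun _ => 1)
  simp only [Finset.sum_const, nsmul_eq_mul, mul_one] at h
  exact_mod_cast h.symm

lemma cnt_le (s : Finset (Fin Q × Fin kap)) (v : Fin Q) : cnt s v ≤ kap := by
  refine (Finset.card_le_univ _).trans ?_
  simp

lemma cnt_compl (s : Finset (Fin Q × Fin kap)) (v : Fin Q) : cnt sᶜ v + cnt s v = kap := by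
  have h := Finset.card_filter_add_card_filter_not (s := (Finset.univ : Finset (Fin kap)))
    (fun j => (v, j) ∈ s)
  simp only [cnt, Finset.mem_compl]
  simp only [Finset.card_univ, Fintype.card_fin] at h
  omega

lemma cnt_insert {s : Finset (Fin Q × Fin kap)} {b : Fin Q × Fin kap} (hb : b ∉ s) (v : Fin Q) :
    cnt (insert b s) v = cnt s v + if v = b.1 then 1 else 0 := by
  rw [cnt_eq_sum, cnt_eq_sum, Finset.sum_insert hb, add_comm]

lemma cnt_erase {s : Finset (Fin Q × Fin kap)} {a : Fin Q × Fin kap} (ha : a ∈ s) (v : Fin Q) :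
    cnt (s.erase a) v + (if v = a.1 then 1 else 0) = cnt s v := by
  rw [cnt_eq_sum, cnt_eq_sum, Finset.sum_erase_add s _ ha]

/-- The load profile of a set of occupied sites. -/
def proj (x : Level (Fin Q × Fin kap) n) : LoadState Q kap n :=
  ⟨fun v => ⟨cnt x.1 v, Nat.lt_succ_of_le (cnt_le x.1 v)⟩, by
    simp only [sum_cnt, x.2]⟩

lemma proj_apply (x : Level (Fin Q × Fin kap) n) (v : Fin Q) :
    (((proj x).1 v : Fin (kap+1)) : ℕ) = cnt x.1 v := rfl

lemma proj_eq_iff (x : Level (Fin Q × Fin kap) n) (xi : LoadState Q kap n) :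
    proj x = xi ↔ ∀ v, cnt x.1 v = (xi.1 v : ℕ) := by
  constructor
  · rintro rfl v; rfl
  · intro h
    apply Subtype.ext
    funext v
    exact Fin.ext (h v)

lemma card_fiber (xi : LoadState Q kap n) :
    (Finset.univ.filter fun x : Level (Fin Q × Fin kap) n => proj x = xi).card
      = ∏ v, kap.choose (xi.1 v : ℕ) := by
  have h : (Fintype.piFinset fun v : Fin Q =>
      Finset.powersetCard (xi.1 v : ℕ) (Finset.univ : Finset (Fin kap))).card
      = ∏ v, kap.choose (xi.1 v : ℕ) := by
    simp [Fintype.card_piFinset]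
  rw [← h]
  refine Finset.card_bij (fun x _ v => Finset.univ.filter fun j => (v, j) ∈ x.1) ?_ ?_ ?_
  · intro x hx
    have hx' := (proj_eq_iff x xi).1 (by simpa using hx)
    simp only [Fintype.mem_piFinset, Finset.mem_powersetCard_univ]
    exact hx'
  · intro x _ y _ hxy
    apply Subtype.ext
    ext ⟨v, j⟩
    have := congrFun hxy v
    have h2 : j ∈ (Finset.univ.filter fun j => (v, j) ∈ x.1) ↔
        j ∈ (Finset.univ.filter fun j => (v, j) ∈ y.1) := by
      rw [this]
    simpa using h2
  · intro f hf
    simp only [Fintype.mem_piFinset, Finset.mem_powersetCard_univ] at hf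
    let s : Finset (Fin Q × Fin kap) := Finset.univ.filter fun p => p.2 ∈ f p.1
    have hs : ∀ v, (Finset.univ.filter fun j => (v, j) ∈ s) = f v := by
      intro v; ext j; simp [s]
    have hc : ∀ v, cnt s v = (xi.1 v : ℕ) := by
      intro v; rw [cnt, hs, hf]
    refine ⟨⟨s, ?_⟩, ?_, funext hs⟩
    · rw [← sum_cnt, Finset.sum_congr rfl (fun v _ => hc v)]
      exact xi.2
    · simp only [Finset.mem_filter, Finset.mem_univ, true_and]
      exact (proj_eq_iff _ _).2 hc

lemma proj_surjective : Function.Surjective (proj (Q := Q) (kap := kap) (n := n)) := by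
  intro xi
  have h : 0 < (Finset.univ.filter fun x : Level (Fin Q × Fin kap) n => proj x = xi).card := by
    rw [card_fiber]
    exact Finset.prod_pos fun v _ => Nat.choose_pos (Nat.lt_succ_iff.1 (xi.1 v).2)
  obtain ⟨x, hx⟩ := Finset.card_pos.1 h
  exact ⟨x, by simpa using hx⟩

/-- The stationary law of the load profile chain is the image of the uniform law on sets of
occupied sites. -/
lemma loadPi_eq (xi : LoadState Q kap n) :
    loadPi Q kap n xi = ∑ x : Level (Fin Q × Fin kap) n,
      if proj x = xi then 1 / (Fintype.card (Level (Fin Q × Fin kap) n) : ℝ) else 0 := by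
  have hw : ∀ eta : LoadState Q kap n, loadWeight Q kap n eta
      = (∏ _v : Fin Q, (1 / (kap.factorial : ℝ))) *
        ((Finset.univ.filter fun x : Level (Fin Q × Fin kap) n => proj x = eta).card : ℝ) := by
    intro eta
    rw [card_fiber, loadWeight, Nat.cast_prod, ← Finset.prod_mul_distrib]
    apply Finset.prod_congr rfl
    intro v _
    rw [Nat.cast_choose ℝ (Nat.lt_succ_iff.1 (eta.1 v).2)]
    have h1 : (kap.factorial : ℝ) ≠ 0 := by exact_mod_cast Nat.factorial_ne_zero _
    field_simp
  have hc : (∏ _v : Fin Q, (1 / (kap.factorial : ℝ))) ≠ 0 :=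
    Finset.prod_ne_zero_iff.2 fun _ _ => one_div_ne_zero
      (by exact_mod_cast Nat.factorial_ne_zero _)
  have hsum : ∑ eta : LoadState Q kap n,
      ((Finset.univ.filter fun x : Level (Fin Q × Fin kap) n => proj x = eta).card : ℝ)
      = Fintype.card (Level (Fin Q × Fin kap) n) := by
    rw [← Nat.cast_sum, ← Finset.card_univ]
    congr 1
    exact (Finset.card_eq_sum_card_fiberwise (fun x _ => Finset.mem_coe.2 (Finset.mem_univ _))).symm
  rw [loadPi]
  simp only [hw]
  rw [← Finset.mul_sum, hsum, mul_div_mul_left _ _ hc, ← Finset.sum_filter, Finset.sum_const,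
    nsmul_eq_mul, mul_one_div]

/-- The load profile of the walk on sets of occupied sites is itself Markov, with transition
matrix `loadP`. -/
lemma lump (hn : 0 < n) (hnN : n ≤ kap * Q) (x : Level (Fin Q × Fin kap) n)
    (xi' : LoadState Q kap n) :
    (∑ y : Level (Fin Q × Fin kap) n, johnson (Fin Q × Fin kap) n x y *
      (if proj y = xi' then 1 else 0)) = loadP Q kap n (proj x) xi' := by
  simp only [proj_eq_iff]
  rw [sum_johnson_mul hn x (fun s => if ∀ v, cnt s v = (xi'.1 v : ℕ) then 1 else 0)]
  let ψ : Fin Q → Fin Q → ℝ := fun u w =>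
    if ∀ v, cnt x.1 v + (if v = w then 1 else 0) = (xi'.1 v : ℕ) + (if v = u then 1 else 0)
      then 1 else 0
  have h1 : ∀ a ∈ x.1, ∑ b ∈ (x.1.erase a)ᶜ,
      (if ∀ v, cnt (insert b (x.1.erase a)) v = (xi'.1 v : ℕ) then (1:ℝ) else 0)
      = ∑ w, ((kap : ℝ) - cnt x.1 w + if w = a.1 then 1 else 0) * ψ a.1 w := by
    intro a ha
    have h2 : ∀ b ∈ (x.1.erase a)ᶜ,
        (if ∀ v, cnt (insert b (x.1.erase a)) v = (xi'.1 v : ℕ) then (1:ℝ) else 0)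
        = ψ a.1 b.1 := by
      intro b hb
      have hb' : b ∉ x.1.erase a := Finset.mem_compl.1 hb
      have hiff : (∀ v, cnt (insert b (x.1.erase a)) v = (xi'.1 v : ℕ)) ↔
          ∀ v, cnt x.1 v + (if v = b.1 then 1 else 0)
            = (xi'.1 v : ℕ) + (if v = a.1 then 1 else 0) := by
        apply forall_congr'
        intro v
        rw [cnt_insert hb', ← cnt_erase ha v]
        omega
      simp only [ψ, hiff]
    rw [Finset.sum_congr rfl h2, sum_comp_fst]
    apply Finset.sum_congr rfl
    intro w _
    congr 1
    have e1 := cnt_compl (x.1.erase a) w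
    have e2 := cnt_erase ha w
    have e1' : (cnt (x.1.erase a)ᶜ w : ℝ) + cnt (x.1.erase a) w = kap := by exact_mod_cast e1
    have e2' : (cnt (x.1.erase a) w : ℝ) + (if w = a.1 then 1 else 0) = cnt x.1 w := by
      rw [← e2]; push_cast; rfl
    linarith
  rw [Finset.sum_congr rfl h1,
    sum_comp_fst x.1 (fun u => ∑ w, ((kap : ℝ) - cnt x.1 w + if w = u then 1 else 0) * ψ u w)]
  have hden : (n : ℝ) * ((Fintype.card (Fin Q × Fin kap) : ℝ) - n + 1)
      = (n : ℝ) * ((1 + kap * Q - n : ℕ) : ℝ) := by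
    rw [Nat.cast_sub (by omega)]
    simp only [Fintype.card_prod, Fintype.card_fin]
    push_cast; ring
  rw [hden, inv_mul_eq_div, loadP]
  split_ifs with hxi
  · congr 1
    have hψ : ∀ u w, ψ u w = if w = u then 1 else 0 := by
      intro u w
      simp only [ψ, hxi, proj_apply]
      by_cases h : w = u
      · subst h; simp
      · rw [if_neg h, if_neg]
        intro hall
        have := hall w
        simp [h] at this
    simp only [hψ, mul_ite, mul_one, mul_zero, Finset.sum_ite_eq', Finset.mem_univ, if_true,
      proj_apply]
    apply Finset.sum_congr rfl
    intro v _
    have := cnt_le x.1 v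
    rw [Nat.cast_sub (by omega)]
    push_cast; ring
  · congr 1
    apply Finset.sum_congr rfl
    intro u _
    rw [Finset.mul_sum]
    apply Finset.sum_congr rfl
    intro w _
    simp only [proj_apply]
    by_cases huw : u = w
    · subst huw
      have : ψ u u = 0 := by
        simp only [ψ]
        rw [if_neg]
        intro hall
        apply hxi
        symm
        rw [proj_eq_iff]
        intro v
        have := hall v
        omega
      simp [this]
    · have hcond : (∀ v, cnt x.1 v + (if v = w then 1 else 0)
            = (xi'.1 v : ℕ) + (if v = u then 1 else 0)) ↔
          (u ≠ w ∧ (xi'.1 u : ℕ) + 1 = cnt x.1 u ∧ (xi'.1 w : ℕ) = cnt x.1 w + 1 ∧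
            ∀ v, v ≠ u → v ≠ w → xi'.1 v = (proj x).1 v) := by
        constructor
        · intro hall
          refine ⟨huw, ?_, ?_, ?_⟩
          · have := hall u; simp [huw] at this; omega
          · have := hall w; simp [Ne.symm huw] at this; omega
          · intro v hvu hvw
            have := hall v
            simp [hvu, hvw] at this
            apply Fin.ext
            rw [proj_apply]; omega
        · rintro ⟨_, h1, h2, h3⟩ v
          by_cases hvu : v = u
          · subst hvu; simp [huw]; omega
          · by_cases hvw : v = w
            · subst hvw; simp [hvu]; omega
            · have := congrArg Fin.val (h3 v hvu hvw)
              rw [proj_apply] at this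
              simp [hvu, hvw]; omega
      simp only [ψ, hcond]
      have hle := cnt_le x.1 w
      rw [Nat.cast_sub hle]
      split_ifs <;> simp_all

lemma evolve_loadP (hn : 0 < n) (hnN : n ≤ kap * Q) (x : Level (Fin Q × Fin kap) n) (t : ℕ)
    (xi : LoadState Q kap n) :
    evolve (loadP Q kap n) (delta (proj x)) t xi
      = ∑ y : Level (Fin Q × Fin kap) n,
        if proj y = xi then (johnson (Fin Q × Fin kap) n ^ t) x y else 0 := by
  induction t generalizing xi with
  | zero =>
    simp only [evolve, delta, pow_zero, Matrix.one_apply]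
    rw [Finset.sum_eq_single x]
    · simp [eq_comm]
    · intro y _ hyx
      simp [Ne.symm hyx]
    · simp
  | succ t ih =>
    simp only [evolve, ih, Finset.sum_mul, ite_mul, zero_mul]
    rw [Finset.sum_comm]
    simp only [Finset.sum_ite_eq, Finset.mem_univ, if_true]
    simp only [← lump hn hnN, Finset.mul_sum]
    rw [Finset.sum_comm]
    apply Finset.sum_congr rfl
    intro y _
    rw [pow_succ, Matrix.mul_apply]
    split_ifs <;> simp

/-- Event probabilities for the load profile chain are those of the walk on occupied sites. -/
lemma event_eq (hn : 0 < n) (hnN : n ≤ kap * Q) (x : Level (Fin Q × Fin kap) n) (t : ℕ)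
    (A : Finset (LoadState Q kap n)) :
    ∑ xi ∈ A, (evolve (loadP Q kap n) (delta (proj x)) t xi - loadPi Q kap n xi)
      = ∑ y : Level (Fin Q × Fin kap) n, if proj y ∈ A then
          (johnson (Fin Q × Fin kap) n ^ t) x y
            - 1 / (Fintype.card (Level (Fin Q × Fin kap) n) : ℝ) else 0 := by
  simp only [evolve_loadP hn hnN, loadPi_eq, ← Finset.sum_sub_distrib]
  rw [Finset.sum_comm]
  apply Finset.sum_congr rfl
  intro y _
  rw [← Finset.sum_ite_eq A (proj y) (fun _ => (johnson (Fin Q × Fin kap) n ^ t) x y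
            - 1 / (Fintype.card (Level (Fin Q × Fin kap) n) : ℝ))]
  apply Finset.sum_congr rfl
  intro xi _
  split_ifs <;> simp

lemma abs_event_le_DTV {X : Type*} [Fintype X] (p : X → X → ℝ) (pi : X → ℝ) (t : ℕ) (x : X)
    (A : Finset X) : |∑ y ∈ A, (evolve p (delta x) t y - pi y)| ≤ DTV p pi t := by
  have h1 : |∑ y ∈ A, (evolve p (delta x) t y - pi y)| ≤ tvDist (evolve p (delta x) t) pi :=
    le_ciSup (f := fun A : Finset X => |∑ y ∈ A, (evolve p (delta x) t y - pi y)|)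
      (Set.finite_range _).bddAbove A
  exact h1.trans (le_ciSup (f := fun x : X => tvDist (evolve p (delta x) t) pi)
    (Set.finite_range _).bddAbove x)

lemma DTV_le {X : Type*} [Fintype X] [Nonempty X] (p : X → X → ℝ) (pi : X → ℝ) (t : ℕ) (e : ℝ)
    (h : ∀ x, ∀ A : Finset X, |∑ y ∈ A, (evolve p (delta x) t y - pi y)| ≤ e) :
    DTV p pi t ≤ e :=
  ciSup_le fun x => ciSup_le fun A => h x A

end Lumping

/-! ### Estimates of the spectral sum -/

section Estimates

/-- The binomial multiplicity is beaten by the decay of the `j`-th eigenvalue at the cutoff time.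
The point is that `(j/N) log N - log j ≤ 1` for `1 ≤ j ≤ N`. -/
lemma choose_mul_exp_le {N j : ℕ} (hj : 0 < j) (hjN : 2 * j ≤ N) {K : ℝ} (hK : 0 ≤ K) :
    (N.choose j : ℝ) * Real.exp (-((j : ℝ) * (N - j + 1) / N * (Real.log N + K)))
      ≤ Real.exp (2 - K / 2) ^ j := by
  have hj0 : (0:ℝ) < j := by exact_mod_cast hj
  have hj1 : (1:ℝ) ≤ j := by exact_mod_cast hj
  have hjN' : 2 * (j:ℝ) ≤ N := by exact_mod_cast hjN
  have hN0 : (0:ℝ) < N := by linarith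
  have h1 : (N.choose j : ℝ) ≤ Real.exp ((j:ℝ) * (Real.log N + 1 - Real.log j)) := by
    have hf : (0:ℝ) < j.factorial := by exact_mod_cast Nat.factorial_pos j
    have e1 := Nat.choose_le_pow_div (α := ℝ) j N
    have e2 := Real.pow_div_factorial_le_exp (j:ℝ) hj0.le j
    have e3 : Real.exp ((j:ℝ) * (Real.log N + 1 - Real.log j))
        = (N:ℝ) ^ j * Real.exp j / (j:ℝ) ^ j := by
      rw [mul_sub, mul_add, mul_one, Real.exp_sub, Real.exp_add, Real.exp_nat_mul, Real.exp_nat_mul,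
        Real.exp_log hN0, Real.exp_log hj0]
    rw [e3]
    refine e1.trans ?_
    rw [div_le_div_iff₀ hf (by positivity)]
    rw [div_le_iff₀ hf] at e2
    calc (N:ℝ) ^ j * (j:ℝ) ^ j ≤ (N:ℝ) ^ j * (Real.exp j * j.factorial) := by gcongr
      _ = _ := by ring
  have h2 : (j:ℝ) / N * Real.log N - Real.log j ≤ 1 := by
    have e1 : Real.log N - Real.log j ≤ N / j - 1 := by
      rw [← Real.log_div hN0.ne' hj0.ne']
      exact Real.log_le_sub_one_of_pos (by positivity)
    have e2 : (j:ℝ) / N ≤ 1 := by rw [div_le_one hN0]; linarith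
    have e3 : 0 ≤ Real.log j := Real.log_nonneg hj1
    have e4 : (j:ℝ) / N * (N / j - 1) = 1 - j / N := by field_simp
    have e5 : 0 ≤ (j:ℝ) / N := by positivity
    nlinarith [mul_le_mul_of_nonneg_left e1 e5]
  have h3 : 0 ≤ Real.log N := Real.log_nonneg (by linarith)
  calc (N.choose j : ℝ) * Real.exp (-((j : ℝ) * (N - j + 1) / N * (Real.log N + K)))
      ≤ Real.exp ((j:ℝ) * (Real.log N + 1 - Real.log j)) *
        Real.exp (-((j : ℝ) * (N - j + 1) / N * (Real.log N + K))) := by gcongr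
    _ ≤ Real.exp ((j:ℝ) * (2 - K / 2)) := by
      rw [← Real.exp_add]
      apply Real.exp_le_exp.2
      have e1 : (j : ℝ) * (N - j + 1) / N = j * (1 - (j / N - 1 / N)) := by field_simp; ring
      rw [e1]
      have e2 : (j:ℝ) / N ≤ 1 / 2 := by rw [div_le_iff₀ hN0]; linarith
      have e3 : (0:ℝ) ≤ 1 / N := by positivity
      have e4 : Real.log N + 1 - Real.log j - (1 - (j / N - 1 / N)) * (Real.log N + K)
          ≤ 2 - K / 2 := by
        nlinarith [mul_nonneg e3 h3, mul_nonneg e3 hK, mul_nonneg (sub_nonneg.2 e2) hK]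
      nlinarith [mul_le_mul_of_nonneg_left e4 hj0.le]
    _ = _ := by rw [Real.exp_nat_mul]

lemma sum_eigen_le {N n : ℕ} (hn : 0 < n) (hnN : 2 * n ≤ N) {K : ℝ} (hK : 0 ≤ K)
    (hK2 : Real.exp (2 - K / 2) ≤ 1 / 2) {t : ℕ}
    (ht : (n : ℝ) * (N - n + 1) / N * (Real.log N + K) ≤ 2 * t) :
    ∑ i ∈ Finset.range n, (N.choose (i+1) : ℝ) *
        (1 - ((i:ℝ) + 1) * (N - i) / ((n : ℝ) * (N - n + 1))) ^ (2*t)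
      ≤ 2 * Real.exp (2 - K / 2) := by
  have hn1 : (1:ℝ) ≤ n := by exact_mod_cast hn
  have hnN' : 2 * (n:ℝ) ≤ N := by exact_mod_cast hnN
  have hN0 : (0:ℝ) < N := by linarith
  have hc : 0 < (n : ℝ) * (N - n + 1) := by apply mul_pos <;> linarith
  set r := Real.exp (2 - K / 2) with hr
  have hr0 : 0 < r := Real.exp_pos _
  have hterm : ∀ i ∈ Finset.range n, (N.choose (i+1) : ℝ) *
        (1 - ((i:ℝ) + 1) * (N - i) / ((n : ℝ) * (N - n + 1))) ^ (2*t) ≤ r ^ (i+1) := by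
    intro i hi
    have hi' : i + 1 ≤ n := Finset.mem_range.1 hi
    have hi'' : (i:ℝ) + 1 ≤ n := by exact_mod_cast hi'
    have hi0 : (0:ℝ) ≤ i := Nat.cast_nonneg i
    refine le_trans ?_ (choose_mul_exp_le (N := N) (j := i+1) (Nat.succ_pos i) (by omega) hK)
    apply mul_le_mul_of_nonneg_left _ (Nat.cast_nonneg _)
    set a := ((i:ℝ) + 1) * (N - i) / ((n : ℝ) * (N - n + 1)) with ha
    have ha1 : a ≤ 1 := by
      rw [ha, div_le_one hc]
      nlinarith [mul_nonneg (sub_nonneg.2 hi'') (by linarith : (0:ℝ) ≤ N - n - i)]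
    have ha0 : 0 ≤ a := div_nonneg (mul_nonneg (by linarith) (by linarith)) hc.le
    calc (1 - a) ^ (2*t) ≤ Real.exp (-a) ^ (2*t) := by
          apply pow_le_pow_left₀ (by linarith)
          have := Real.add_one_le_exp (-a); linarith
      _ = Real.exp (-(2 * t * a)) := by
          rw [← Real.exp_nat_mul]; push_cast; congr 1; ring
      _ ≤ _ := by
          apply Real.exp_le_exp.2
          have h1 := mul_le_mul_of_nonneg_right ht ha0
          have h2 : (n : ℝ) * (N - n + 1) / N * (Real.log N + K) * a
              = (((i+1 : ℕ) : ℝ)) * (N - ((i+1 : ℕ) : ℝ) + 1) / N * (Real.log N + K) := by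
            have h3 : (N:ℝ) - n + 1 ≠ 0 := right_ne_zero_of_mul hc.ne'
            rw [ha]; push_cast; field_simp; ring
          linarith
  refine (Finset.sum_le_sum hterm).trans ?_
  have hgeom : ∀ m : ℕ, (∑ i ∈ Finset.range m, r ^ (i+1)) ≤ 2 * r - 2 * r ^ (m+1) := by
    intro m
    induction m with
    | zero => simp
    | succ m ih =>
      rw [Finset.sum_range_succ]
      have h1 : 0 < r ^ (m+1) := by positivity
      have h2 : r ^ (m+1+1) = r ^ (m+1) * r := pow_succ _ _
      nlinarith
  have := hgeom n
  have h1 : 0 < r ^ (n+1) := by positivity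
  linarith

end Estimates

/-! ### Upper and lower bounds for the load profile chain -/

section Bounds

variable {Q kap n : ℕ}

lemma upper_DTV (hn : 0 < n) (hnN : 2 * n ≤ kap * Q) {eps K : ℝ} (heps : 0 < eps) (hK : 0 ≤ K)
    (hK2 : Real.exp (2 - K / 2) ≤ 1 / 2) (hK3 : 2 * Real.exp (2 - K / 2) ≤ eps ^ 2) {t : ℕ}
    (ht : (n : ℝ) * (((kap * Q : ℕ) : ℝ) - n + 1) / ((kap * Q : ℕ) : ℝ)
      * (Real.log ((kap * Q : ℕ) : ℝ) + K) ≤ 2 * t) :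
    DTV (loadP Q kap n) (loadPi Q kap n) t ≤ eps := by
  have hcard : Fintype.card (Fin Q × Fin kap) = kap * Q := by
    simp [mul_comm]
  have hnN1 : n ≤ kap * Q := by omega
  have hne : Nonempty (Level (Fin Q × Fin kap) n) := by
    rw [← Fintype.card_pos_iff, Fintype.card_finset_len, hcard]
    exact Nat.choose_pos hnN1
  have : Nonempty (LoadState Q kap n) := hne.map proj
  apply DTV_le
  intro xi A
  obtain ⟨x, rfl⟩ := proj_surjective xi
  rw [event_eq hn hnN1]
  calc _ ≤ ∑ y : Level (Fin Q × Fin kap) n, |(johnson (Fin Q × Fin kap) n ^ t) x y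
            - 1 / (Fintype.card (Level (Fin Q × Fin kap) n) : ℝ)| := by
        refine (Finset.abs_sum_le_sum_abs _ _).trans (Finset.sum_le_sum fun y _ => ?_)
        split_ifs
        · exact le_rfl
        · rw [abs_zero]; exact abs_nonneg _
    _ ≤ _ := johnson_l1_le hn (by rw [hcard]; exact hnN1) t x
    _ ≤ Real.sqrt (eps ^ 2) := by
        apply Real.sqrt_le_sqrt
        rw [hcard]
        exact (sum_eigen_le hn hnN hK hK2 ht).trans hK3
    _ = eps := Real.sqrt_sq heps.le

/-- A starting set that is as concentrated as possible on one resource. -/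
lemma exists_start (hkap : 0 < kap) (hQ : 2 ≤ Q) (hnN : 2 * n ≤ kap * Q) (v : Fin Q) :
    ∃ x : Level (Fin Q × Fin kap) n,
      (n : ℝ) / Q ≤ blockDev (Finset.univ.filter fun p : Fin Q × Fin kap => p.1 = v) n x.1 := by
  set B := Finset.univ.filter fun p : Fin Q × Fin kap => p.1 = v with hB
  have hcard : Fintype.card (Fin Q × Fin kap) = kap * Q := by
    simp [mul_comm]
  have hBc : B.card = kap := by
    have : B = {v} ×ˢ (Finset.univ : Finset (Fin kap)) := by
      ext ⟨a, b⟩; simp [hB, eq_comm]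
    rw [this, Finset.card_product]; simp
  have hQ' : (2:ℝ) ≤ Q := by exact_mod_cast hQ
  have hk' : (0:ℝ) < kap := by exact_mod_cast hkap
  have hmean : (n : ℝ) * B.card / Fintype.card (Fin Q × Fin kap) = n / Q := by
    rw [hBc, hcard]; push_cast; field_simp
  have hn0 : (0:ℝ) ≤ n := Nat.cast_nonneg n
  rcases le_total n kap with h | h
  · obtain ⟨u, _, hu2, hu3⟩ := Finset.exists_subsuperset_card_eq (Finset.empty_subset B)
      (Nat.zero_le n) (by rw [hBc]; exact h)
    refine ⟨⟨u, hu3⟩, ?_⟩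
    rw [blockDev, hmean, Finset.inter_eq_left.2 hu2, hu3]
    have : (n:ℝ) / Q ≤ n / 2 := by gcongr
    linarith
  · obtain ⟨u, hu1, _, hu3⟩ := Finset.exists_subsuperset_card_eq (Finset.subset_univ B)
      (by rw [hBc]; exact h) (n := n) (by rw [Finset.card_univ, hcard]; omega)
    refine ⟨⟨u, hu3⟩, ?_⟩
    rw [blockDev, hmean, Finset.inter_eq_right.2 hu1, hBc]
    have h2 : 2 * (n:ℝ) ≤ kap * Q := by exact_mod_cast hnN
    have : (n:ℝ) / Q ≤ kap / 2 := by
      rw [div_le_div_iff₀ (by linarith) (by norm_num)]; linarith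
    linarith

lemma lt_of_sq_mean_large {eps x r m : ℝ} (hx : 0 < x) (hm : 0 < m) (hr : r ≤ x) (heps : eps < 1)
    (h : 9 * x / (1 - eps) ≤ m ^ 2) : eps < 1 - 8 * r / m ^ 2 := by
  have h1 : 8 * r / m ^ 2 < 1 - eps := by
    rw [div_lt_iff₀ (by positivity)]
    rw [div_le_iff₀ (by linarith)] at h
    linarith
  linarith

lemma lower_DTV (hkap : 0 < kap) (hQ : 2 ≤ Q) (hn : 4 ≤ n) (hnN : 2 * n ≤ kap * Q)
    {rho eps C : ℝ} (hrho : 0 < rho) (hrho1 : rho ≤ 1 / 2) (heps1 : eps < 1)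
    (hnrho : (n : ℝ) ≤ rho * ((kap * Q : ℕ) : ℝ)) (hC0 : 0 ≤ C)
    (hC : Real.exp (2 * C - 4) = 9 * (Q : ℝ) ^ 2 / (1 - eps)) {t : ℕ}
    (ht : (t : ℝ) < 1 / 2 * (1 - rho) * n * Real.log n - C * n) :
    eps < DTV (loadP Q kap n) (loadPi Q kap n) t := by
  have hcard : Fintype.card (Fin Q × Fin kap) = kap * Q := by
    simp [mul_comm]
  have hn4 : (4:ℝ) ≤ n := by exact_mod_cast hn
  have hQ' : (2:ℝ) ≤ Q := by exact_mod_cast hQ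
  let v : Fin Q := ⟨0, by omega⟩
  obtain ⟨x, hx⟩ := exists_start (n := n) hkap hQ hnN v
  set B := Finset.univ.filter fun p : Fin Q × Fin kap => p.1 = v with hB
  have hNn : 2 * (n:ℝ) ≤ ((kap * Q : ℕ) : ℝ) := by exact_mod_cast hnN
  set N : ℝ := ((kap * Q : ℕ) : ℝ) with hN
  have hN0 : 0 < N := by linarith
  set r : ℝ := (n : ℝ) * (N - n + 1) / N with hr
  have hrq : (1 - rho) * n ≤ r := by
    rw [hr, le_div_iff₀ hN0]; nlinarith
  have hrn : r ≤ n := by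
    rw [hr, div_le_iff₀ hN0]; nlinarith
  have hq : (n:ℝ) / 2 ≤ (1 - rho) * n := by nlinarith
  have hr2 : 2 ≤ r := by linarith
  have hg : N / ((n : ℝ) * (N - n + 1)) = r⁻¹ := by rw [hr, inv_div]
  have hgap : 2 * (N / ((n : ℝ) * (N - n + 1))) ≤ 1 := by
    rw [hg, ← div_eq_mul_inv, div_le_one (by linarith)]; exact hr2
  have hlog : Real.log n ≤ n - 1 := Real.log_le_sub_one_of_pos (by linarith)
  -- the decay of the eigenfunction up to time `t`
  have hpow : Real.exp (-(1 / 2 * Real.log n + 2 - C)) ≤ (1 - r⁻¹) ^ t := by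
    have h1 : Real.exp (-(r - 1)⁻¹) ≤ 1 - r⁻¹ := by
      have e1 : (1 - r⁻¹) = (1 + (r - 1)⁻¹)⁻¹ := by
        have h1 : r - 1 ≠ 0 := by linarith
        have h2 : r ≠ 0 := by linarith
        have e0 : 1 + (r - 1)⁻¹ = r / (r - 1) := by field_simp; ring
        rw [e0, inv_div r, sub_div, div_self h2, one_div]
      rw [e1, Real.exp_neg]
      have : 0 < (r - 1)⁻¹ := inv_pos.2 (by linarith)
      apply inv_anti₀ (by linarith)
      have := Real.add_one_le_exp ((r - 1)⁻¹)
      linarith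
    have h2 : Real.exp (-(1 / 2 * Real.log n + 2 - C)) ≤ Real.exp (-(r - 1)⁻¹) ^ t := by
      rw [← Real.exp_nat_mul]
      apply Real.exp_le_exp.2
      have h3 : (t:ℝ) * (r - 1)⁻¹ ≤ 1 / 2 * Real.log n + 2 - C := by
        rw [← div_eq_mul_inv, div_le_iff₀ (by linarith)]
        set q := (1 - rho) * n with hqdef
        set s := 1 / 2 * Real.log n - C with hs
        have ht' : (t:ℝ) < q * s := by
          have : q ≤ n := by nlinarith
          have := mul_le_mul_of_nonneg_left this hC0
          calc (t:ℝ) < 1 / 2 * (1 - rho) * n * Real.log n - C * n := ht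
            _ ≤ q * s := by rw [hs]; nlinarith
        have hs0 : 0 < s := by
          have h0 : 0 < q * s := lt_of_le_of_lt (Nat.cast_nonneg t) ht'
          exact pos_of_mul_pos_right h0 (by linarith)
        have e1 : s + 2 ≤ 2 * q := by linarith
        have e2 : (s + 2) * (q - 1) ≤ (s + 2) * (r - 1) := by
          apply mul_le_mul_of_nonneg_left <;> linarith
        have e3 : 1 / 2 * Real.log n + 2 - C = s + 2 := by rw [hs]; ring
        rw [e3]
        nlinarith
      linarith
    exact h2.trans (pow_le_pow_left₀ (Real.exp_pos _).le h1 t)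
  set m : ℝ := (1 - r⁻¹) ^ t * blockDev B n x.1 with hm
  have hm1 : Real.exp (-(1 / 2 * Real.log n + 2 - C)) * (n / Q) ≤ m := by
    apply mul_le_mul hpow hx (by positivity) ((Real.exp_pos _).le.trans hpow)
  have hm0 : 0 < m := lt_of_lt_of_le (by positivity) hm1
  have hm2 : 9 * n / (1 - eps) ≤ m ^ 2 := by
    have e1 := pow_le_pow_left₀ (by positivity) hm1 2
    refine le_trans (le_of_eq ?_) e1
    rw [mul_pow, ← Real.exp_nat_mul,
      show ((2:ℕ):ℝ) * -(1 / 2 * Real.log n + 2 - C) = (2 * C - 4) - Real.log n by push_cast; ring,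
      Real.exp_sub, hC, Real.exp_log (by linarith)]
    have : 1 - eps ≠ 0 := by linarith
    field_simp
  have hlow := johnson_lower (α := Fin Q × Fin kap) (k := n) (by omega) (by rw [hcard]; omega) B
    (by rw [hcard]; exact hgap) x t m (by rw [hcard, ← hN, hg, hm]) hm0
  rw [hcard, ← hN, ← hr] at hlow
  let A : Finset (LoadState Q kap n) := Finset.univ.filter fun xi =>
    m / 2 < ((xi.1 v : ℕ) : ℝ) - (n : ℝ) * B.card / Fintype.card (Fin Q × Fin kap)
  have hA : ∀ y : Level (Fin Q × Fin kap) n, proj y ∈ A ↔ m / 2 < blockDev B n y.1 := by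
    intro y
    have hcnt : (y.1 ∩ B).card = cnt y.1 v := by
      rw [cnt_eq_sum, ← Finset.filter_mem_eq_inter, Finset.card_filter]
      simp [hB, eq_comm]
    simp only [A, Finset.mem_filter, Finset.mem_univ, true_and, proj_apply, blockDev, hcnt]
  have hev := event_eq (by omega) (by omega) x t A
  simp only [hA] at hev
  have hle := (le_abs_self _).trans
    (abs_event_le_DTV (loadP Q kap n) (loadPi Q kap n) t (proj x) A)
  rw [hev] at hle
  have hfin : eps < 1 - 8 * r / m ^ 2 :=
    lt_of_sq_mean_large (by linarith) hm0 hrn heps1 hm2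
  exact hfin.trans_le (hlow.trans hle)

end Bounds

/-! ### Cutoff -/

/-- cutoff at time `(1/2)(1-rho) n log n` with window `O(n)` for the
load profile chain. -/
theorem statement1 (Q : Nat) (hQ : 2 ≤ Q) (rho : Real) (hrho0 : 0 < rho) (hrho1 : rho ≤ 1/2)
    (eps : Real) (heps0 : 0 < eps) (heps1 : eps < 1) :
    ∃ Ceps Neps : Real, ∀ kap : Nat, 0 < kap →
      ∀ n : Nat, n = ⌊rho * ((kap * Q : Nat) : Real)⌋₊ →
      Neps ≤ (n : Real) →
      |((Tmix (loadP Q kap n) (loadPi Q kap n) eps : Nat) : Real)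
          - (1/2) * (1 - rho) * (n : Real) * Real.log (n : Real)| ≤ Ceps * (n : Real) := by
  have hQ' : (2:ℝ) ≤ Q := by exact_mod_cast hQ
  -- `K` makes the geometric ratio `exp (2 - K/2)` equal to `eps ^ 2 / 2`
  set K : ℝ := 4 - 2 * Real.log (eps ^ 2 / 2) with hK
  have hexpK : Real.exp (2 - K / 2) = eps ^ 2 / 2 := by
    rw [hK, show 2 - (4 - 2 * Real.log (eps ^ 2 / 2)) / 2 = Real.log (eps ^ 2 / 2) by ring,
      Real.exp_log (by positivity)]
  have hK0 : 0 ≤ K := by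
    have : Real.log (eps ^ 2 / 2) ≤ 0 := Real.log_nonpos (by positivity) (by nlinarith)
    linarith
  -- `C2` makes the squared mean of the test function at least `9 n / (1 - eps)`
  set C2 : ℝ := 2 + 1 / 2 * Real.log (9 * (Q:ℝ) ^ 2 / (1 - eps)) with hC2
  have hexpC : Real.exp (2 * C2 - 4) = 9 * (Q : ℝ) ^ 2 / (1 - eps) := by
    rw [hC2, show 2 * (2 + 1 / 2 * Real.log (9 * (Q:ℝ) ^ 2 / (1 - eps))) - 4
      = Real.log (9 * (Q:ℝ) ^ 2 / (1 - eps)) by ring, Real.exp_log]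
    exact div_pos (by positivity) (by linarith)
  have hC20 : 0 ≤ C2 := by
    have : 0 ≤ Real.log (9 * (Q:ℝ) ^ 2 / (1 - eps)) := by
      apply Real.log_nonneg
      rw [le_div_iff₀ (by linarith)]
      nlinarith
    linarith
  set L : ℝ := Real.log (2 / rho) + K with hL
  have hL0 : 0 ≤ L := by
    have : 0 ≤ Real.log (2 / rho) := Real.log_nonneg (by rw [le_div_iff₀ hrho0]; linarith)
    linarith
  refine ⟨max (L + 2) C2, 4, ?_⟩
  intro kap hkap n hn hn4
  have hn4' : 4 ≤ n := by exact_mod_cast hn4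
  have hN0 : (0:ℝ) < ((kap * Q : ℕ) : ℝ) := by
    have : 0 < kap * Q := Nat.mul_pos hkap (by omega)
    exact_mod_cast this
  have hfl : (n:ℝ) ≤ rho * ((kap * Q : ℕ) : ℝ) := by
    rw [hn]; exact Nat.floor_le (by positivity)
  have hfl2 : rho * ((kap * Q : ℕ) : ℝ) < n + 1 := by
    rw [hn]; exact Nat.lt_floor_add_one _
  have hnN : 2 * n ≤ kap * Q := by
    have : 2 * (n:ℝ) ≤ ((kap * Q : ℕ) : ℝ) := by nlinarith
    exact_mod_cast this
  have hnNr : 2 * (n:ℝ) ≤ ((kap * Q : ℕ) : ℝ) := by exact_mod_cast hnN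
  set N : ℝ := ((kap * Q : ℕ) : ℝ) with hN
  set r : ℝ := (n : ℝ) * (N - n + 1) / N with hr
  have hr0 : 0 ≤ r := by
    rw [hr]; apply div_nonneg _ hN0.le; apply mul_nonneg <;> linarith
  have hlogN0 : 0 ≤ Real.log N := Real.log_nonneg (by linarith)
  have hmem : ⌈r / 2 * (Real.log N + K)⌉₊ ∈
      {t : ℕ | DTV (loadP Q kap n) (loadPi Q kap n) t ≤ eps} := by
    apply upper_DTV (by omega) hnN heps0 hK0
    · rw [hexpK]; nlinarith
    · rw [hexpK]; linarith
    · rw [← hN, ← hr]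
      have := Nat.le_ceil (r / 2 * (Real.log N + K))
      linarith
  rw [abs_le]
  have hn0 : (0:ℝ) ≤ n := by linarith
  constructor
  · by_contra hcon
    push Not at hcon
    have hmax := mul_le_mul_of_nonneg_right (le_max_right (L + 2) C2) hn0
    have hlt := lower_DTV hkap hQ hn4' hnN hrho0 hrho1 heps1 hfl hC20 hexpC
      (t := Tmix (loadP Q kap n) (loadPi Q kap n) eps) (by linarith)
    have hle : DTV (loadP Q kap n) (loadPi Q kap n) (Tmix (loadP Q kap n) (loadPi Q kap n) eps)
        ≤ eps := Nat.sInf_mem ⟨_, hmem⟩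
    linarith
  · have hmax := mul_le_mul_of_nonneg_right (le_max_left (L + 2) C2) hn0
    have hT : Tmix (loadP Q kap n) (loadPi Q kap n) eps ≤ ⌈r / 2 * (Real.log N + K)⌉₊ :=
      Nat.sInf_le hmem
    have hT' : (Tmix (loadP Q kap n) (loadPi Q kap n) eps : ℝ)
        ≤ (⌈r / 2 * (Real.log N + K)⌉₊ : ℝ) := by exact_mod_cast hT
    have hceil := Nat.ceil_lt_add_one (a := r / 2 * (Real.log N + K))
      (mul_nonneg (by linarith) (by linarith))
    have hr1 : r ≤ (1 - rho) * n + 1 := by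
      rw [hr, div_le_iff₀ hN0]
      nlinarith
    have hlogN : Real.log N ≤ Real.log n + Real.log (2 / rho) := by
      rw [← Real.log_mul (by linarith) (by positivity)]
      apply Real.log_le_log hN0
      rw [← mul_div_assoc, le_div_iff₀ hrho0]
      linarith
    have hlogn : Real.log n ≤ n - 1 := Real.log_le_sub_one_of_pos (by linarith)
    have hlogn0 : 0 ≤ Real.log n := Real.log_nonneg (by linarith)
    have h1 : r / 2 * (Real.log N + K) ≤ ((1 - rho) * n + 1) / 2 * (Real.log n + L) := by
      apply mul_le_mul <;> linarith
    have h2 : (1 - rho) * n * L ≤ n * L := by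
      apply mul_le_mul_of_nonneg_right _ hL0
      nlinarith
    have h3 : L ≤ n * L := le_mul_of_one_le_left hL0 (by linarith)
    have h4 : ((1 - rho) * n + 1) / 2 * (Real.log n + L)
        = 1 / 2 * (1 - rho) * n * Real.log n + (1 - rho) * n * L / 2 + Real.log n / 2 + L / 2 := by
      ring
    rw [h4] at h1
    rw [add_mul, mul_comm L] at hmax
    linarith

end CongestionPaper
end
end

section
/- For every δ > 0 there exist constants c_δ > 0 and N_δ such that for all initial states ξ₀ ∈ Ξ(δ) and all N ≥ N_δ, the load profile chain started from ξ₀ satisfies P_{ξ₀}( ⋃_{0 ≤ t ≤ N²} { ξ(t) ∉ Ξ(2δ) } ) ≤ e^{−c_δ N}. -/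
/-!
The proof is an exponential Lyapunov (drift) argument. Put `N = κQ`, `M = 1 + N - n`, and let
`G ξ = ∑ ξ_v² - n²/Q` be the centred second moment of the load profile (`loadG`), so that
`‖ξ/N - ρ/Q‖² = G ξ / N² + (n/N - ρ)²/Q`, where the last term is `O(N⁻²)`.

A move `v₋ → v₊` changes `G` by `2 (ξ_{v₊} - ξ_{v₋}) + 2 = O(N)`, and averaging over the pairs
`(v₋, v₊)` gives a mean change of at most `2 - 2 N G/(nM)`, since
`∑_{u,w} ξ_u (κ - ξ_w)(ξ_w - ξ_u) = -N G`. Hence, for small fixed `a`, the function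
`W = exp (a G/N)` satisfies `E[W(ξ')] ≤ W(ξ) (1 + 9a² + 2a/N - 2aG/(nM))` (`load_step_exp`). As
`nM ≤ N²`, this is at most `W(ξ)` when `G ≥ δ²N²`, and at most `3 exp (a δ² N)` otherwise
(`load_drift`).

A maximal inequality for functions with `E[W(ξ')] ≤ W(ξ) + B` (`hitProb_le`) then bounds the
probability of reaching `G ≥ 3δ²N²` before time `N²` by `(1 + 3N²) exp (-2aδ²N)`, which is at most
`exp (-aδ²N)` for large `N`.
-/

open scoped BigOperators
open Filter MeasureTheory

noncomputable section

namespace CongestionPaper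

attribute [local instance 10] Classical.propDecidable

/-! ### A maximal inequality for finite Markov chains -/

lemma pathProb_cons {X : Type*} [Fintype X] (p : X → X → ℝ) (x a : X) (T : ℕ)
    (w : Fin (T + 1) → X) :
    pathProb p x (T + 1) (Fin.cons a w) =
      if a = x then ∑ y, p x y * pathProb p y T w else 0 := by
  unfold pathProb
  rw [Fin.prod_univ_succ]
  simp only [Fin.cons_zero, Fin.castSucc_zero, Fin.cons_succ, ← Fin.succ_castSucc]
  split_ifs with h
  · subst h
    simp
  · simp

lemma pathProb_nonneg {X : Type*} [Fintype X] {p : X → X → ℝ} (hp : ∀ x y, 0 ≤ p x y) (x : X)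
    (T : ℕ) (w : Fin (T + 1) → X) : 0 ≤ pathProb p x T w := by
  unfold pathProb
  refine mul_nonneg (by split_ifs <;> norm_num) (Finset.prod_nonneg fun t _ => hp _ _)

lemma sum_pathProb_succ {X : Type*} [Fintype X] (p : X → X → ℝ) (x : X) (T : ℕ)
    (F : (Fin (T + 2) → X) → ℝ) :
    ∑ w, F w * pathProb p x (T + 1) w =
      ∑ y, p x y * ∑ w : Fin (T + 1) → X, F (Fin.cons x w) * pathProb p y T w := by
  rw [← (Fin.consEquiv (fun _ : Fin (T + 2) => X)).sum_comp, Fintype.sum_prod_type]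
  change ∑ a, ∑ w, F (Fin.cons a w) * pathProb p x (T + 1) (Fin.cons a w) = _
  simp only [pathProb_cons]
  rw [Finset.sum_eq_single x]
  · simp only [if_true, Finset.mul_sum]
    rw [Finset.sum_comm]
    exact Finset.sum_congr rfl fun _ _ => Finset.sum_congr rfl fun _ _ => by ring
  · intro b _ hb
    simp [hb]
  · simp

lemma sum_pathProb_le_one {X : Type*} [Fintype X] {p : X → X → ℝ} (hp : ∀ x y, 0 ≤ p x y)
    (hp1 : ∀ x, ∑ y, p x y ≤ 1) (T : ℕ) : ∀ x, ∑ w, pathProb p x T w ≤ 1 := by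
  induction T with
  | zero =>
    intro x
    rw [← (Equiv.funUnique (Fin 1) X).symm.sum_comp]
    simp [pathProb]
  | succ T ih =>
    intro x
    have h := sum_pathProb_succ p x T (fun _ => 1)
    simp only [one_mul] at h
    rw [h]
    refine le_trans (Finset.sum_le_sum fun y _ => ?_) (hp1 x)
    exact mul_le_of_le_one_right (hp x y) (ih y)

/-- Maximal inequality: if `W ≥ 0` grows by at most `B` in mean at each step and `W ≥ 1` on the bad
set, then the bad set is hit before time `T` with probability at most `W x + T B`. Sub-stochastic
transition matrices are enough for the upper bound. -/
lemma hitProb_le {X : Type*} [Fintype X] {p : X → X → ℝ} (hp : ∀ x y, 0 ≤ p x y)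
    (hp1 : ∀ x, ∑ y, p x y ≤ 1) {W : X → ℝ} {B : ℝ} (hB : 0 ≤ B) (hW : ∀ x, 0 ≤ W x)
    (hWB : ∀ x, ∑ y, p x y * W y ≤ W x + B) {Bad : X → Prop} (hBad : ∀ x, Bad x → 1 ≤ W x)
    (T : ℕ) : ∀ x, hitProb p x T Bad ≤ W x + T * B := by
  have hbad : ∀ (T : ℕ) x, Bad x → hitProb p x T Bad ≤ W x + T * B := by
    intro T x hx
    have h1 : hitProb p x T Bad ≤ ∑ w, pathProb p x T w := by
      refine Finset.sum_le_sum fun w _ => ?_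
      split_ifs
      · exact le_rfl
      · exact pathProb_nonneg hp x T w
    have h2 := sum_pathProb_le_one hp hp1 T x
    have h3 := hBad x hx
    have : 0 ≤ (T : ℝ) * B := by positivity
    linarith
  induction T with
  | zero =>
    intro x
    by_cases hx : Bad x
    · exact hbad 0 x hx
    · unfold hitProb
      rw [← (Equiv.funUnique (Fin 1) X).symm.sum_comp]
      have : ∑ y : X, (if ∃ t, Bad ((Equiv.funUnique (Fin 1) X).symm y t) then
          pathProb p x 0 ((Equiv.funUnique (Fin 1) X).symm y) else 0) = 0 := by
        refine Finset.sum_eq_zero fun y _ => ?_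
        by_cases hy : y = x
        · subst hy
          simp [hx]
        · simp [pathProb, hy]
      rw [this]
      simpa using hW x
  | succ T ih =>
    intro x
    by_cases hx : Bad x
    · exact hbad (T + 1) x hx
    · have h := sum_pathProb_succ p x T (fun w => if ∃ t, Bad (w t) then 1 else 0)
      have e1 : hitProb p x (T + 1) Bad =
          ∑ w : Fin (T + 2) → X, (if ∃ t, Bad (w t) then 1 else 0) * pathProb p x (T + 1) w :=
        Finset.sum_congr rfl fun w _ => by split_ifs <;> simp
      have e2 : ∀ y, ∑ w : Fin (T + 1) → X,
          (if ∃ t, Bad ((Fin.cons x w : Fin (T + 2) → X) t) then 1 else 0) * pathProb p y T w =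
            hitProb p y T Bad := by
        intro y
        refine Finset.sum_congr rfl fun w _ => ?_
        simp [Fin.exists_fin_succ, hx]
      rw [e1, h]
      simp only [e2]
      calc ∑ y, p x y * hitProb p y T Bad
          ≤ ∑ y, p x y * (W y + T * B) :=
            Finset.sum_le_sum fun y _ => mul_le_mul_of_nonneg_left (ih y) (hp x y)
        _ = ∑ y, p x y * W y + (∑ y, p x y) * (T * B) := by
            rw [Finset.sum_mul, ← Finset.sum_add_distrib]
            exact Finset.sum_congr rfl fun y _ => by ring
        _ ≤ (W x + B) + 1 * (T * B) := by
            have := hWB x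
            have := hp1 x
            gcongr
        _ = W x + (T + 1 : ℕ) * B := by push_cast; ring

/-! ### One step of the load profile chain -/

/-- `loadMove x y u w`: the profile `y` is obtained from `x` by moving one unit from `u` to `w`. -/
def loadMove {Q kap n : ℕ} (x y : LoadState Q kap n) (u w : Fin Q) : Prop :=
  u ≠ w ∧ (y.1 u : ℕ) + 1 = (x.1 u : ℕ) ∧ (y.1 w : ℕ) = (x.1 w : ℕ) + 1 ∧
    (∀ v, v ≠ u → v ≠ w → y.1 v = x.1 v)

lemma loadMove_unique {Q kap n : ℕ} {x y z : LoadState Q kap n} {u w : Fin Q}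
    (hy : loadMove x y u w) (hz : loadMove x z u w) : y = z := by
  obtain ⟨_, h1, h2, h3⟩ := hy
  obtain ⟨_, k1, k2, k3⟩ := hz
  apply Subtype.ext
  funext v
  by_cases hu : v = u
  · subst hu
    exact Fin.ext (by omega)
  · by_cases hw : v = w
    · subst hw
      exact Fin.ext (by omega)
    · rw [h3 v hu hw, k3 v hu hw]

lemma load_le {Q kap n : ℕ} (x : LoadState Q kap n) (v : Fin Q) : (x.1 v : ℕ) ≤ kap :=
  Nat.lt_succ_iff.mp (x.1 v).2

lemma load_sum {Q kap n : ℕ} (x : LoadState Q kap n) : ∑ v, ((x.1 v : ℕ) : ℝ) = n := by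
  exact_mod_cast x.2

lemma loadP_nonneg (Q kap n : ℕ) (x y : LoadState Q kap n) : 0 ≤ loadP Q kap n x y := by
  unfold loadP
  split_ifs
  · positivity
  · refine div_nonneg (Finset.sum_nonneg fun u _ => Finset.sum_nonneg fun w _ => ?_) (by positivity)
    split_ifs <;> positivity

/-- The mean of `g` after one step is bounded by a sum over pairs `(v₋, v₊)`, where `h v₋ v₊` bounds
`g` after the move `v₋ → v₊`, and the diagonal terms correspond to staying put. -/
lemma loadP_sum_le {Q kap n : ℕ} (x : LoadState Q kap n) (g : LoadState Q kap n → ℝ)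
    (h : Fin Q → Fin Q → ℝ) (hh : ∀ u w, 0 ≤ h u w) (hd : ∀ u, g x ≤ h u u)
    (hg : ∀ y u w, loadMove x y u w → g y ≤ h u w) :
    ∑ y, loadP Q kap n x y * g y ≤
      (∑ u, ((x.1 u : ℕ) : ℝ) * h u u +
        ∑ u, ∑ w, ((x.1 u : ℕ) : ℝ) * ((kap : ℝ) - ((x.1 w : ℕ) : ℝ)) * h u w)
        / ((n : ℝ) * ((1 + kap * Q - n : ℕ) : ℝ)) := by
  have hk : ∀ v, ((kap - (x.1 v : ℕ) : ℕ) : ℝ) = (kap : ℝ) - ((x.1 v : ℕ) : ℝ) := fun v =>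
    Nat.cast_sub (load_le x v)
  have hk' : ∀ v, ((1 + kap - (x.1 v : ℕ) : ℕ) : ℝ) = 1 + (kap : ℝ) - ((x.1 v : ℕ) : ℝ) := by
    intro v
    rw [Nat.cast_sub (by have := load_le x v; omega)]
    push_cast
    ring
  have hkn : ∀ v, 0 ≤ (kap : ℝ) - ((x.1 v : ℕ) : ℝ) := fun v => by
    rw [← hk]; positivity
  set D := (n : ℝ) * ((1 + kap * Q - n : ℕ) : ℝ) with hD
  have hD0 : 0 ≤ D := by positivity
  -- The transition matrix is at most its diagonal part plus the contribution of all moves.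
  have hP : ∀ y, loadP Q kap n x y * g y ≤
      ((if y = x then ∑ u, ((x.1 u : ℕ) : ℝ) * (1 + (kap : ℝ) - ((x.1 u : ℕ) : ℝ)) * h u u else 0) +
        ∑ u, ∑ w, if loadMove x y u w then
          ((x.1 u : ℕ) : ℝ) * ((kap : ℝ) - ((x.1 w : ℕ) : ℝ)) * h u w else 0) / D := by
    intro y
    have hs : 0 ≤ ∑ u, ∑ w, if loadMove x y u w then
          ((x.1 u : ℕ) : ℝ) * ((kap : ℝ) - ((x.1 w : ℕ) : ℝ)) * h u w else 0 := by
      refine Finset.sum_nonneg fun u _ => Finset.sum_nonneg fun w _ => ?_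
      have := hkn w
      have := hh u w
      split_ifs <;> positivity
    unfold loadP
    by_cases hy : y = x
    · subst hy
      rw [if_pos rfl, if_pos rfl, ← hD, div_mul_eq_mul_div]
      refine div_le_div_of_nonneg_right ?_ hD0
      refine le_trans ?_ (le_add_of_nonneg_right hs)
      rw [Finset.sum_mul]
      refine Finset.sum_le_sum fun u _ => ?_
      rw [hk']
      refine mul_le_mul_of_nonneg_left (hd u) ?_
      have := hkn u
      have : 0 ≤ 1 + (kap : ℝ) - ((y.1 u : ℕ) : ℝ) := by linarith
      positivity
    · rw [if_neg hy, if_neg hy, ← hD, div_mul_eq_mul_div, zero_add]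
      refine div_le_div_of_nonneg_right ?_ hD0
      rw [Finset.sum_mul]
      refine Finset.sum_le_sum fun u _ => ?_
      rw [Finset.sum_mul]
      refine Finset.sum_le_sum fun w _ => ?_
      by_cases hm : loadMove x y u w
      · have hm2 := hm
        unfold loadMove at hm2
        rw [if_pos hm, if_pos hm2, hk]
        have := hkn w
        exact mul_le_mul_of_nonneg_left (hg y u w hm) (by positivity)
      · have hm2 := hm
        unfold loadMove at hm2
        rw [if_neg hm, if_neg hm2, zero_mul]
  refine le_trans (Finset.sum_le_sum fun y _ => hP y) ?_
  rw [← Finset.sum_div]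
  refine div_le_div_of_nonneg_right ?_ hD0
  rw [Finset.sum_add_distrib, Finset.sum_ite_eq' Finset.univ x, if_pos (Finset.mem_univ x)]
  have hsw : ∑ y : LoadState Q kap n, (∑ u, ∑ w, if loadMove x y u w then
          ((x.1 u : ℕ) : ℝ) * ((kap : ℝ) - ((x.1 w : ℕ) : ℝ)) * h u w else 0) ≤
      ∑ u, ∑ w, if u = w then 0 else
        ((x.1 u : ℕ) : ℝ) * ((kap : ℝ) - ((x.1 w : ℕ) : ℝ)) * h u w := by
    rw [Finset.sum_comm]
    refine Finset.sum_le_sum fun u _ => ?_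
    rw [Finset.sum_comm]
    refine Finset.sum_le_sum fun w _ => ?_
    have := hkn w
    have := hh u w
    by_cases huw : u = w
    · rw [if_pos huw]
      exact (Finset.sum_eq_zero fun y _ => if_neg fun hm => hm.1 huw).le
    · rw [if_neg huw]
      by_cases hex : ∃ z, loadMove x z u w
      · obtain ⟨z, hz⟩ := hex
        rw [Finset.sum_eq_single z]
        · rw [if_pos hz]
        · intro y _ hyz
          exact if_neg fun hm => hyz (loadMove_unique hm hz)
        · simp
      · rw [Finset.sum_eq_zero fun y _ => if_neg fun hm => hex ⟨y, hm⟩]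
        positivity
  refine (add_le_add le_rfl hsw).trans (le_of_eq ?_)
  rw [← Finset.sum_add_distrib, ← Finset.sum_add_distrib]
  refine Finset.sum_congr rfl fun u _ => ?_
  have : ∑ w, ((x.1 u : ℕ) : ℝ) * ((kap : ℝ) - ((x.1 w : ℕ) : ℝ)) * h u w =
      ((x.1 u : ℕ) : ℝ) * ((kap : ℝ) - ((x.1 u : ℕ) : ℝ)) * h u u +
      ∑ w, if u = w then 0 else
        ((x.1 u : ℕ) : ℝ) * ((kap : ℝ) - ((x.1 w : ℕ) : ℝ)) * h u w := by
    have hsplit : ∀ w, ((x.1 u : ℕ) : ℝ) * ((kap : ℝ) - ((x.1 w : ℕ) : ℝ)) * h u w =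
        (if u = w then ((x.1 u : ℕ) : ℝ) * ((kap : ℝ) - ((x.1 w : ℕ) : ℝ)) * h u w else 0) +
        if u = w then 0 else
          ((x.1 u : ℕ) : ℝ) * ((kap : ℝ) - ((x.1 w : ℕ) : ℝ)) * h u w := by
      intro w
      split_ifs <;> simp
    rw [Finset.sum_congr rfl fun w _ => hsplit w, Finset.sum_add_distrib,
      Finset.sum_ite_eq Finset.univ u, if_pos (Finset.mem_univ u)]
  rw [this]
  ring

/-! ### The Lyapunov function -/

/-- The centred second moment `∑ ξ_v² - n²/Q = ∑ (ξ_v - n/Q)²` of a load profile. -/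
def loadG {Q kap n : ℕ} (x : LoadState Q kap n) : ℝ :=
  ∑ v, ((x.1 v : ℕ) : ℝ) ^ 2 - (n : ℝ) ^ 2 / Q

lemma loadG_nonneg {Q kap n : ℕ} (hQ : 2 ≤ Q) (x : LoadState Q kap n) : 0 ≤ loadG x := by
  have h := sq_sum_le_card_mul_sum_sq (s := (Finset.univ : Finset (Fin Q)))
    (f := fun v => ((x.1 v : ℕ) : ℝ))
  rw [load_sum, Finset.card_univ, Fintype.card_fin] at h
  have hQ0 : (0 : ℝ) < Q := by exact_mod_cast (by omega : 0 < Q)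
  unfold loadG
  rw [sub_nonneg, div_le_iff₀ hQ0]
  linarith

lemma loadG_move {Q kap n : ℕ} {x y : LoadState Q kap n} {u w : Fin Q} (h : loadMove x y u w) :
    loadG y = loadG x + (2 * (((x.1 w : ℕ) : ℝ) - ((x.1 u : ℕ) : ℝ)) + 2) := by
  obtain ⟨huw, h1, h2, h3⟩ := h
  have h1' : ((y.1 u : ℕ) : ℝ) + 1 = ((x.1 u : ℕ) : ℝ) := by exact_mod_cast h1
  have h2' : ((y.1 w : ℕ) : ℝ) = ((x.1 w : ℕ) : ℝ) + 1 := by exact_mod_cast h2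
  have key : ∑ v, (((y.1 v : ℕ) : ℝ) ^ 2 - ((x.1 v : ℕ) : ℝ) ^ 2) =
      2 * (((x.1 w : ℕ) : ℝ) - ((x.1 u : ℕ) : ℝ)) + 2 := by
    rw [← Finset.sum_subset (Finset.subset_univ {u, w}), Finset.sum_pair huw, h2', ← h1']
    · ring
    · intro v _ hv
      simp only [Finset.mem_insert, Finset.mem_singleton, not_or] at hv
      rw [h3 v hv.1 hv.2, sub_self]
  rw [Finset.sum_sub_distrib] at key
  unfold loadG
  linarith

/-- The squared distance to the constant profile `ρ/Q`, split into the centred second moment and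
the error from rounding `n = ⌊ρN⌋`. -/
lemma load_dist_eq {Q kap n : ℕ} (hQ : 2 ≤ Q) (hk : 0 < kap) (rho : ℝ) (x : LoadState Q kap n) :
    ∑ v, (((x.1 v : ℕ) : ℝ) / ((kap * Q : ℕ) : ℝ) - rho / (Q : ℝ)) ^ 2 =
      loadG x / ((kap * Q : ℕ) : ℝ) ^ 2 + ((n : ℝ) / ((kap * Q : ℕ) : ℝ) - rho) ^ 2 / Q := by
  have hQ0 : (0 : ℝ) < Q := by exact_mod_cast (by omega : 0 < Q)
  have hN0 : (0 : ℝ) < ((kap * Q : ℕ) : ℝ) := by exact_mod_cast Nat.mul_pos hk (by omega)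
  set N : ℝ := ((kap * Q : ℕ) : ℝ)
  have e : ∀ v, (((x.1 v : ℕ) : ℝ) / N - rho / (Q : ℝ)) ^ 2 =
      ((x.1 v : ℕ) : ℝ) ^ 2 * (1 / N ^ 2) - ((x.1 v : ℕ) : ℝ) * (2 * rho / (N * Q)) +
        rho ^ 2 / Q ^ 2 := by
    intro v
    field_simp
    ring
  rw [Finset.sum_congr rfl fun v _ => e v, Finset.sum_add_distrib, Finset.sum_sub_distrib,
    ← Finset.sum_mul, ← Finset.sum_mul, load_sum]
  simp only [Finset.sum_const, Finset.card_univ, Fintype.card_fin, nsmul_eq_mul]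
  unfold loadG
  field_simp
  ring

lemma sum_weights {Q kap n : ℕ} (x : LoadState Q kap n) :
    ∑ u, ∑ w, ((x.1 u : ℕ) : ℝ) * ((kap : ℝ) - ((x.1 w : ℕ) : ℝ)) =
      n * (((kap * Q : ℕ) : ℝ) - n) := by
  rw [← Finset.sum_mul_sum, load_sum, Finset.sum_sub_distrib, load_sum]
  simp only [Finset.sum_const, Finset.card_univ, Fintype.card_fin, nsmul_eq_mul]
  push_cast
  ring

/-- The mean change of the load profile points towards the constant profile. -/
lemma sum_weights_diff {Q kap n : ℕ} (hQ : 2 ≤ Q) (x : LoadState Q kap n) :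
    ∑ u, ∑ w, ((x.1 u : ℕ) : ℝ) * ((kap : ℝ) - ((x.1 w : ℕ) : ℝ)) *
        (((x.1 w : ℕ) : ℝ) - ((x.1 u : ℕ) : ℝ)) = -(((kap * Q : ℕ) : ℝ) * loadG x) := by
  have hQ0 : (0 : ℝ) < Q := by exact_mod_cast (by omega : 0 < Q)
  have e : ∀ u w, ((x.1 u : ℕ) : ℝ) * ((kap : ℝ) - ((x.1 w : ℕ) : ℝ)) *
        (((x.1 w : ℕ) : ℝ) - ((x.1 u : ℕ) : ℝ)) =
      ((x.1 u : ℕ) : ℝ) * (((x.1 w : ℕ) : ℝ) * kap - ((x.1 w : ℕ) : ℝ) ^ 2) -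
        ((x.1 u : ℕ) : ℝ) ^ 2 * ((kap : ℝ) - ((x.1 w : ℕ) : ℝ)) := fun u w => by ring
  simp only [e, Finset.sum_sub_distrib, ← Finset.mul_sum, ← Finset.sum_mul, load_sum]
  simp only [Finset.sum_const, Finset.card_univ, Fintype.card_fin, nsmul_eq_mul]
  unfold loadG
  push_cast
  field_simp
  ring

lemma load_n_le {Q kap n : ℕ} (x : LoadState Q kap n) : n ≤ kap * Q := by
  rw [← x.2]
  refine (Finset.sum_le_sum fun v _ => load_le x v).trans ?_
  simp [mul_comm]

lemma load_denom {Q kap n : ℕ} (x : LoadState Q kap n) :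
    ((1 + kap * Q - n : ℕ) : ℝ) = 1 + ((kap * Q : ℕ) : ℝ) - n := by
  rw [Nat.cast_sub (by have := load_n_le x; omega)]
  push_cast
  ring

lemma loadP_sum_le_one {Q kap n : ℕ} (hn : 0 < n) (x : LoadState Q kap n) :
    ∑ y, loadP Q kap n x y ≤ 1 := by
  have h := loadP_sum_le x (fun _ => 1) (fun _ _ => 1) (fun _ _ => zero_le_one) (fun _ => le_rfl)
    (fun _ _ _ _ => le_rfl)
  simp only [mul_one, load_sum, sum_weights, load_denom x] at h
  refine h.trans (div_le_one_of_le₀ (le_of_eq (by ring)) ?_)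
  have : (n : ℝ) ≤ ((kap * Q : ℕ) : ℝ) := by exact_mod_cast load_n_le x
  have : 0 ≤ 1 + ((kap * Q : ℕ) : ℝ) - n := by linarith
  positivity

/-- One-step estimate for `exp (a G / N)`, from `exp s ≤ 1 + s + s²` for `|s| ≤ 1`. -/
lemma load_step_exp {Q kap n : ℕ} (hQ : 2 ≤ Q) (hk : 0 < kap) (hn : 0 < n) {a : ℝ} (ha : 0 < a)
    (ha3 : 3 * a ≤ 1) (x : LoadState Q kap n) :
    ∑ y, loadP Q kap n x y * Real.exp (a * loadG y / ((kap * Q : ℕ) : ℝ)) ≤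
      Real.exp (a * loadG x / ((kap * Q : ℕ) : ℝ)) *
        (1 + 9 * a ^ 2 + 2 * a / ((kap * Q : ℕ) : ℝ) -
          2 * a * loadG x / (n * (1 + ((kap * Q : ℕ) : ℝ) - n))) := by
  have hkQ : 2 * (kap : ℝ) ≤ ((kap * Q : ℕ) : ℝ) := by
    exact_mod_cast (by nlinarith : 2 * kap ≤ kap * Q)
  have hN1 : (1 : ℝ) ≤ ((kap * Q : ℕ) : ℝ) := by
    exact_mod_cast Nat.mul_pos hk (by omega : 0 < Q)
  have hnN : (n : ℝ) ≤ ((kap * Q : ℕ) : ℝ) := by exact_mod_cast load_n_le x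
  have hn0 : (0 : ℝ) < n := by exact_mod_cast hn
  have hden := load_denom x
  have hsw := sum_weights x
  have hswd := sum_weights_diff hQ x
  set N : ℝ := ((kap * Q : ℕ) : ℝ) with hN
  have hN0 : 0 < N := by linarith
  have hD0 : 0 < (n : ℝ) * (1 + N - n) := mul_pos hn0 (by linarith)
  have hxk : ∀ v, ((x.1 v : ℕ) : ℝ) ≤ kap := fun v => by exact_mod_cast load_le x v
  set s : Fin Q → Fin Q → ℝ := fun u w =>
    a * (2 * (((x.1 w : ℕ) : ℝ) - ((x.1 u : ℕ) : ℝ)) + 2) / N with hs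
  have hsabs : ∀ u w, |s u w| ≤ 3 * a := by
    intro u w
    have h1 := hxk u
    have h2 := hxk w
    have h3 : (0 : ℝ) ≤ ((x.1 u : ℕ) : ℝ) := by positivity
    have h4 : (0 : ℝ) ≤ ((x.1 w : ℕ) : ℝ) := by positivity
    rw [hs, abs_div, abs_mul, abs_of_pos ha, abs_of_pos hN0, div_le_iff₀ hN0, mul_assoc, mul_left_comm]
    refine mul_le_mul_of_nonneg_left ?_ ha.le
    rw [abs_le]
    constructor <;> linarith
  have hsexp : ∀ u w, Real.exp (s u w) ≤ 1 + 9 * a ^ 2 + s u w := by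
    intro u w
    have h1 := hsabs u w
    have h2 := (abs_le.mp (Real.abs_exp_sub_one_sub_id_le (h1.trans ha3))).2
    have h3 : s u w ^ 2 ≤ (3 * a) ^ 2 := sq_le_sq' (abs_le.mp h1).1 (abs_le.mp h1).2
    linarith
  set E := Real.exp (a * loadG x / N) with hE
  have hE0 : 0 < E := Real.exp_pos _
  have hmain := loadP_sum_le x (fun y => Real.exp (a * loadG y / N))
    (fun u w => E * (1 + 9 * a ^ 2 + s u w))
    (fun u w => mul_nonneg hE0.le ((Real.exp_pos _).le.trans (hsexp u w)))
    (fun u => by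
      have : 0 ≤ s u u := by
        simp only [hs, sub_self]
        positivity
      have : 0 ≤ a ^ 2 := sq_nonneg a
      exact le_mul_of_one_le_right hE0.le (by linarith))
    (fun y u w hm => by
      have : a * loadG y / N = a * loadG x / N + s u w := by
        rw [loadG_move hm]
        simp only [hs]
        ring
      simp only [this, Real.exp_add]
      exact mul_le_mul_of_nonneg_left (hsexp u w) hE0.le)
  refine hmain.trans (le_of_eq ?_)
  rw [hden, div_eq_iff hD0.ne']
  have e1 : ∑ u, ((x.1 u : ℕ) : ℝ) * (E * (1 + 9 * a ^ 2 + s u u)) =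
      n * (E * (1 + 9 * a ^ 2 + 2 * a / N)) := by
    rw [← load_sum x, Finset.sum_mul]
    refine Finset.sum_congr rfl fun u _ => ?_
    simp only [hs]
    ring
  have e2 : ∑ u, ∑ w, ((x.1 u : ℕ) : ℝ) * ((kap : ℝ) - ((x.1 w : ℕ) : ℝ)) *
        (E * (1 + 9 * a ^ 2 + s u w)) =
      E * (1 + 9 * a ^ 2 + 2 * a / N) * (n * (N - n)) + E * (2 * a / N) * (-(N * loadG x)) := by
    rw [← hsw, ← hswd]
    simp only [Finset.mul_sum]
    simp only [← Finset.sum_add_distrib]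
    refine Finset.sum_congr rfl fun u _ => Finset.sum_congr rfl fun w _ => ?_
    simp only [hs]
    ring
  rw [e1, e2]
  have : 0 < 1 + N - n := by linarith
  field_simp
  ring

/-- The drift condition: `exp (a G / N)` does not grow in mean when `G ≥ δ² N²`, and in the remaining
region its mean after one step is at most `3 exp (a δ² N)`. -/
lemma load_drift {Q kap n : ℕ} (hQ : 2 ≤ Q) (hk : 0 < kap) (hn : 0 < n) {a del : ℝ} (ha : 0 < a)
    (ha3 : 3 * a ≤ 1) (had : 18 * a ≤ del ^ 2) (hN : 4 ≤ del ^ 2 * ((kap * Q : ℕ) : ℝ))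
    (x : LoadState Q kap n) :
    ∑ y, loadP Q kap n x y * Real.exp (a * loadG y / ((kap * Q : ℕ) : ℝ)) ≤
      Real.exp (a * loadG x / ((kap * Q : ℕ) : ℝ)) +
        3 * Real.exp (a * del ^ 2 * ((kap * Q : ℕ) : ℝ)) := by
  refine (load_step_exp hQ hk hn ha ha3 x).trans ?_
  have hG := loadG_nonneg hQ x
  have hN1 : (1 : ℝ) ≤ ((kap * Q : ℕ) : ℝ) := by
    exact_mod_cast Nat.mul_pos hk (by omega : 0 < Q)
  have hnN : (n : ℝ) ≤ ((kap * Q : ℕ) : ℝ) := by exact_mod_cast load_n_le x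
  have hn1 : (1 : ℝ) ≤ n := by exact_mod_cast hn
  set N : ℝ := ((kap * Q : ℕ) : ℝ)
  have hN0 : 0 < N := by linarith
  have hD0 : 0 < (n : ℝ) * (1 + N - n) := mul_pos (by linarith) (by linarith)
  have hDN : (n : ℝ) * (1 + N - n) ≤ N ^ 2 := by nlinarith
  have hE0 : 0 < Real.exp (a * loadG x / N) := Real.exp_pos _
  have hF0 : 0 < Real.exp (a * del ^ 2 * N) := Real.exp_pos _
  by_cases hc : del ^ 2 * N ^ 2 ≤ loadG x
  · have h1 : a * del ^ 2 * 2 ≤ 2 * a * loadG x / (n * (1 + N - n)) := by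
      rw [le_div_iff₀ hD0]
      have : a * del ^ 2 * 2 * (n * (1 + N - n)) ≤ a * del ^ 2 * 2 * N ^ 2 := by gcongr
      nlinarith
    have h2 : 2 * a / N ≤ a * del ^ 2 / 2 := by
      rw [div_le_iff₀ hN0]
      nlinarith
    have h3 : 9 * a ^ 2 ≤ a * del ^ 2 / 2 := by nlinarith
    have h4 : 0 ≤ a * del ^ 2 := by positivity
    have := mul_le_of_le_one_right hE0.le
      (by linarith : 1 + 9 * a ^ 2 + 2 * a / N - 2 * a * loadG x / (n * (1 + N - n)) ≤ 1)
    linarith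
  · push Not at hc
    have h1 : 0 ≤ 2 * a * loadG x / (n * (1 + N - n)) := by positivity
    have h2 : 2 * a / N ≤ 1 := by
      rw [div_le_one hN0]
      linarith
    have h3 : 9 * a ^ 2 ≤ 1 := by nlinarith
    have h4 : Real.exp (a * loadG x / N) ≤ Real.exp (a * del ^ 2 * N) := by
      apply Real.exp_le_exp.mpr
      rw [div_le_iff₀ hN0]
      nlinarith
    have := mul_le_mul_of_nonneg_left
      (by linarith : 1 + 9 * a ^ 2 + 2 * a / N - 2 * a * loadG x / (n * (1 + N - n)) ≤ 3) hE0.le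
    linarith

/-- Exponential growth beats the number of time steps. -/
lemma eventually_poly_le_exp {b : ℝ} (hb : 0 < b) :
    ∃ N0 : ℝ, ∀ N : ℝ, N0 ≤ N → 1 + 3 * N ^ 2 ≤ Real.exp (b * N) := by
  have h := isLittleO_pow_exp_pos_mul_atTop 2 hb
  have h1 := h.bound (by norm_num : (0 : ℝ) < 1 / 4)
  have h2 : ∀ᶠ N : ℝ in atTop, 1 + 3 * N ^ 2 ≤ Real.exp (b * N) := by
    filter_upwards [h1, eventually_ge_atTop (1 : ℝ)] with N hN h1N
    rw [Real.norm_of_nonneg (by positivity), Real.norm_of_nonneg (Real.exp_pos _).le] at hN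
    nlinarith
  exact eventually_atTop.mp h2

/-- with probability at least `1 - e^{-c N}`, the load profile chain
started in `Xi(delta)` stays in `Xi(2 delta)` up to time `N^2`. -/
theorem statement3 (Q : Nat) (hQ : 2 ≤ Q) (rho : Real) (hrho0 : 0 < rho) (hrho1 : rho < 1)
    (del : Real) (hdel : 0 < del) :
    ∃ cdel Ndel : Real, 0 < cdel ∧
      ∀ kap : Nat, 0 < kap → ∀ n : Nat, n = ⌊rho * ((kap * Q : Nat) : Real)⌋₊ →
      Ndel ≤ ((kap * Q : Nat) : Real) →
      ∀ xi0 : LoadState Q kap n, loadNear Q kap n rho xi0 del →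
        hitProb (loadP Q kap n) xi0 ((kap * Q)^2)
            (fun xi => ¬ loadNear Q kap n rho xi (2 * del))
          ≤ Real.exp (-cdel * ((kap * Q : Nat) : Real)) := by
  obtain ⟨a, ha, ha3, had⟩ : ∃ a : ℝ, 0 < a ∧ 3 * a ≤ 1 ∧ 18 * a ≤ del ^ 2 := by
    refine ⟨min (1 / 3) (del ^ 2 / 18), by positivity, ?_, ?_⟩
    · have := min_le_left (1 / 3 : ℝ) (del ^ 2 / 18)
      linarith
    · have := min_le_right (1 / 3 : ℝ) (del ^ 2 / 18)
      linarith
  have hd2 : 0 < del ^ 2 := by positivity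
  have hb : 0 < a * del ^ 2 := by positivity
  obtain ⟨N0, hN0⟩ := eventually_poly_le_exp hb
  -- `N ≥ 1/ρ` makes `n` positive, and `N ≥ 4/δ²` controls the lower-order terms.
  refine ⟨a * del ^ 2, max N0 (max (4 / del ^ 2) (1 / rho)), hb, ?_⟩
  intro kap hk n hn hNbig xi0 hxi0
  have hNN0 : N0 ≤ ((kap * Q : ℕ) : ℝ) := (le_max_left _ _).trans hNbig
  have hNd : 4 / del ^ 2 ≤ ((kap * Q : ℕ) : ℝ) :=
    (le_max_left _ _).trans ((le_max_right _ _).trans hNbig)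
  have hNr : 1 / rho ≤ ((kap * Q : ℕ) : ℝ) :=
    (le_max_right _ _).trans ((le_max_right _ _).trans hNbig)
  have hN1 : (1 : ℝ) ≤ ((kap * Q : ℕ) : ℝ) := by
    exact_mod_cast Nat.mul_pos hk (by omega : 0 < Q)
  have hNd' : 4 ≤ del ^ 2 * ((kap * Q : ℕ) : ℝ) := by
    rw [div_le_iff₀ hd2] at hNd
    linarith
  have hNr' : 1 ≤ rho * ((kap * Q : ℕ) : ℝ) := by
    rw [div_le_iff₀ hrho0] at hNr
    linarith
  have hnpos : 0 < n := by
    rw [hn]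
    exact Nat.floor_pos.mpr hNr'
  have hnle : (n : ℝ) ≤ rho * ((kap * Q : ℕ) : ℝ) := by
    rw [hn]
    exact Nat.floor_le (by linarith)
  have hnlt : rho * ((kap * Q : ℕ) : ℝ) < n + 1 := by
    rw [hn]
    exact Nat.lt_floor_add_one _
  have hdist := fun x : LoadState Q kap n => load_dist_eq hQ hk rho x
  have hdrift := load_drift (Q := Q) (kap := kap) (n := n) hQ hk hnpos ha ha3 had hNd'
  have hcast : (((kap * Q) ^ 2 : ℕ) : ℝ) = ((kap * Q : ℕ) : ℝ) ^ 2 := by push_cast; ring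
  have hpoly := hN0 _ hNN0
  have hQ2 : (2 : ℝ) ≤ Q := by exact_mod_cast hQ
  unfold loadNear at *
  set N : ℝ := ((kap * Q : ℕ) : ℝ)
  have hNpos : 0 < N := by linarith
  have hround : ((n : ℝ) / N - rho) ^ 2 / Q * N ^ 2 ≤ 1 := by
    have e : ((n : ℝ) / N - rho) ^ 2 / Q * N ^ 2 = (n - rho * N) ^ 2 / Q := by
      field_simp
    rw [e, div_le_one (by linarith)]
    nlinarith
  have hround0 : 0 ≤ ((n : ℝ) / N - rho) ^ 2 / Q := by positivity
  have hstart : loadG xi0 ≤ del ^ 2 * N ^ 2 := by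
    rw [hdist, Real.sqrt_le_left hdel.le] at hxi0
    rw [← div_le_iff₀ (by positivity)]
    linarith
  have hbad : ∀ x : LoadState Q kap n,
      ¬ Real.sqrt (∑ v, (((x.1 v : ℕ) : ℝ) / N - rho / (Q : ℝ)) ^ 2) ≤ 2 * del →
      3 * del ^ 2 * N ^ 2 ≤ loadG x := by
    intro x hx
    rw [hdist, Real.sqrt_le_left (by positivity), not_le] at hx
    have h1 := mul_lt_mul_of_pos_right hx (by positivity : 0 < N ^ 2)
    rw [add_mul, div_mul_cancel₀ _ (by positivity)] at h1
    nlinarith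
  set F := Real.exp (-(3 * (a * del ^ 2) * N)) with hF
  have hF0 : 0 < F := Real.exp_pos _
  have hmax := hitProb_le (loadP_nonneg Q kap n) (fun x => loadP_sum_le_one hnpos x)
    (W := fun x => F * Real.exp (a * loadG x / N)) (B := F * (3 * Real.exp (a * del ^ 2 * N)))
    (by positivity) (fun x => by positivity)
    (fun x => by
      have := mul_le_mul_of_nonneg_left (hdrift x) hF0.le
      rw [Finset.mul_sum, mul_add] at this
      refine le_trans (le_of_eq (Finset.sum_congr rfl fun y _ => ?_)) this
      ring)
    (Bad := fun x => ¬ Real.sqrt (∑ v, (((x.1 v : ℕ) : ℝ) / N - rho / (Q : ℝ)) ^ 2) ≤ 2 * del)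
    (fun x hx => by
      rw [hF, ← Real.exp_add]
      apply Real.one_le_exp
      have h1 : 3 * (a * del ^ 2) * N ≤ a * loadG x / N := by
        rw [le_div_iff₀ hNpos]
        have := mul_le_mul_of_nonneg_left (hbad x hx) ha.le
        nlinarith
      linarith)
    ((kap * Q) ^ 2) xi0
  refine hmax.trans ?_
  rw [hcast]
  have hW0 : Real.exp (a * loadG xi0 / N) ≤ Real.exp (a * del ^ 2 * N) := by
    apply Real.exp_le_exp.mpr
    rw [div_le_iff₀ hNpos]
    nlinarith
  calc F * Real.exp (a * loadG xi0 / N) + N ^ 2 * (F * (3 * Real.exp (a * del ^ 2 * N)))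
      ≤ F * Real.exp (a * del ^ 2 * N) + N ^ 2 * (F * (3 * Real.exp (a * del ^ 2 * N))) := by
        gcongr
    _ = F * Real.exp (a * del ^ 2 * N) * (1 + 3 * N ^ 2) := by ring
    _ ≤ F * Real.exp (a * del ^ 2 * N) * Real.exp (a * del ^ 2 * N) := by gcongr
    _ = Real.exp (-(a * del ^ 2) * N) := by
        rw [hF, ← Real.exp_add, ← Real.exp_add]
        congr 1
        ring

end CongestionPaper
end
end
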